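/- Fix integers n ≥ 1, s ≥ 0, r ≥ 1, and d_1, d_2 with d_1 > r(n−1) and d_2 > r(n−1), and let P_L = {(x,y) ∈ ℝ² : 0 ≤ x ≤ d_1 and 0 ≤ y ≤ d_2 + s·x}. Let W ⊆ A^r be the ℂ-subspace of all f ∈ A^r such that for each i = 1,…,n, every monomial appearing in f has (deg_{x_i}, deg_{y_i}) ∈ P_L. Then a vector (a_1,…,a_n,b_1,…,b_n) ∈ ℤ^{2n}_{≥0} is the trailing exponent of some nonzero f ∈ W if and only if (a_1,b_1),…,(a_n,b_n) is an r-lexicographically increasing n-tuple of integer points in P_L. -/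

import Mathlib

/-!
Write `f ∈ A^r` as a polynomial in the `x_i` with coefficients in `ℂ[y_1,…,y_n]`. Its trailing
exponent is `(a, b)`, where `a` is the lexicographically lowest exponent of `f` in `x` and `b` the
lowest exponent of the coefficient `g` of `x^a` (`isTrailingExp_iff`).

*Necessity* (`bounds_of_lowestAt`). An element of `A^r` is symmetric up to sign, so `a` is
nondecreasing. For `i < j`, substitute `x_i = X x_j`. An alternating polynomial lands in the ideal
generated by `X - 1` and `y_i - y_j`, so `f` lands in its `r`-th power. By minimality of `a` and
symmetry, the part containing `g` has degrees in `X` between `a_i` and `a_j`; a polynomial with so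
few coefficients cannot be divisible by `(X - 1)^(a_j - a_i + 1)` modulo a power of `y_i - y_j`, so
`(y_i - y_j)^(r - (a_j - a_i))` divides `g` (`pow_dvd_of_lowestAt`). The product `V` of these
powers over all `i < j` divides `g`, and comparing lowest exponents and degrees of `g` and `V`
gives both bounds on `b`. The spacing condition on points with `a_i = a_j` holds because
`g / (y_i - y_j)^r` is then symmetric in `y_i, y_j`.

*Sufficiency* (`exists_trailing`). Split every `a_j` into the `r` parts `⌈(a_j - m) / r⌉`,
`0 ≤ m < r`, and antisymmetrise, for each `m`, the product of the monomial in `x` with these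
exponents, the Vandermonde product of each set of indices with equal part, and a polynomial `q_m`
in `y` symmetric on each of these sets. The product over `m` of the resulting alternating
polynomials has lowest `x`-exponent `a`, with coefficient a nonzero multiple of `V ∏ q_m`. The sets
of indices with equal part, for all `m`, are the windows `{j | τ - r < a_j ≤ τ}`, and a degree count
shows that products of `windowMult τ` elementary symmetric polynomials of each window are available
for `∏ q_m`. To reach the exponent `b` one needs a polynomial with lowest exponent `b` minus that
of `V`. Such a polynomial is a product of elementary symmetric polynomials of the level sets of `a`
(`exists_mem_prod_blocks`). The Dedekind–Mertens lemma, applied to the polynomials `∏ (X + y_j)`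
over windows and level sets, shows that the span of such products lies in the span of the products
of window symmetric polynomials (`prod_blocks_le_prod_windows`); the hypothesis `d_2 > r (n - 1)`
provides the multiplicities which that lemma requires.
-/

open Finset

noncomputable section

/-- The polynomial ring `ℂ[x_1,y_1,…,x_n,y_n]`: `Sum.inl i ↦ x_i`, `Sum.inr i ↦ y_i`. -/
abbrev PolyRing (n : ℕ) := MvPolynomial (Fin n ⊕ Fin n) ℂ

/-- `f` is alternating for the `S_n`-action `σ·x_i = x_{σ(i)}`, `σ·y_i = y_{σ(i)}`. -/
def IsAlternating (n : ℕ) (f : PolyRing n) : Prop :=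
  ∀ σ : Equiv.Perm (Fin n),
    MvPolynomial.rename (Equiv.sumCongr σ σ) f = ((Equiv.Perm.sign σ : ℤ) : ℂ) • f

/-- `A^r`: the ℂ-linear span of products of `r` alternating polynomials. -/
def Ar (n r : ℕ) : Submodule ℂ (PolyRing n) :=
  Submodule.span ℂ
    {f | ∃ g : Fin r → PolyRing n, (∀ m, IsAlternating n (g m)) ∧ f = ∏ m, g m}

/-- The subspace of polynomials all of whose monomials have
`(deg_{x_i}, deg_{y_i}) ∈ P_L = {(x,y) | 0 ≤ x ≤ d1, 0 ≤ y ≤ d2 + s·x}` for every `i`. -/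
def SuppInPoly (n : ℕ) (s d1 d2 : ℤ) : Submodule ℂ (PolyRing n) where
  carrier := {f | ∀ d ∈ f.support, ∀ i : Fin n,
    ((d (Sum.inl i) : ℤ) ≤ d1 ∧ (d (Sum.inr i) : ℤ) ≤ d2 + s * (d (Sum.inl i) : ℤ))}
  add_mem' := by
    intro f g hf hg d hd i
    rcases Finset.mem_union.mp (MvPolynomial.support_add hd) with h | h
    · exact hf d h i
    · exact hg d h i
  zero_mem' := by
    intro d hd i
    simp at hd
  smul_mem' := by
    intro c f hf d hd i
    exact hf d (MvPolynomial.support_smul hd) i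

/-- An `r`-lexicographically increasing `n`-tuple of integer points in the trapezoid
`P_L = {(x,y) | 0 ≤ x ≤ d1, 0 ≤ y ≤ d2 + s*x}`: the points are `(a j, b j)` for `j : Fin n`. -/
def RLexIncIn (n : ℕ) (s d1 d2 r : ℤ) (a b : Fin n → ℤ) : Prop :=
  Monotone a ∧
  (∀ i : Fin n, ∀ h : (i : ℕ) + 1 < n,
      a i = a ⟨(i : ℕ) + 1, h⟩ → b i + r ≤ b ⟨(i : ℕ) + 1, h⟩) ∧
  (∀ h : 0 < n, 0 ≤ a ⟨0, h⟩) ∧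
  (∀ h : 0 < n, a ⟨n - 1, by omega⟩ ≤ d1) ∧
  (∀ j : Fin n,
    (∑ i ∈ univ.filter (fun i => i < j), max (r - (a j - a i)) 0) ≤ b j ∧
    b j ≤ d2 + s * a j - ∑ k ∈ univ.filter (fun k => j < k), max (r - (a k - a j)) 0)

/-- The position of a variable in the order `x_1 > ⋯ > x_n > y_1 > ⋯ > y_n`. -/
def varIdx (n : ℕ) : Fin n ⊕ Fin n → ℕ
  | Sum.inl i => (i : ℕ)
  | Sum.inr i => n + (i : ℕ)

/-- Strict lexicographic order on monomial exponents with respect to the variable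
order `x_1 > ⋯ > x_n > y_1 > ⋯ > y_n`. -/
def MonLT (n : ℕ) (d e : (Fin n ⊕ Fin n) →₀ ℕ) : Prop :=
  ∃ v, d v < e v ∧ ∀ w, varIdx n w < varIdx n v → d w = e w

/-- `d` is the trailing (lex-smallest) exponent of the nonzero polynomial `f`. -/
def IsTrailingExp (n : ℕ) (f : PolyRing n) (d : (Fin n ⊕ Fin n) →₀ ℕ) : Prop :=
  f ≠ 0 ∧ d ∈ f.support ∧ ∀ e ∈ f.support, e ≠ d → MonLT n d e

/-! ### The Dedekind–Mertens lemma for spans of coefficients -/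

/-- The `k`-linear span of the coefficients of a polynomial over a `k`-algebra. -/
def coeffSpan (k : Type*) {A : Type*} [CommRing k] [CommRing A] [Algebra k A]
    (f : Polynomial A) : Submodule k A :=
  Submodule.span k (Set.range f.coeff)

section DedekindMertens

variable {k A : Type*} [CommRing k] [CommRing A] [Algebra k A]

lemma coeff_mem_coeffSpan (f : Polynomial A) (i : ℕ) : f.coeff i ∈ coeffSpan k f :=
  Submodule.subset_span ⟨i, rfl⟩

lemma coeffSpan_le_iff (f : Polynomial A) (S : Submodule k A) :
    coeffSpan k f ≤ S ↔ ∀ i, f.coeff i ∈ S := by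
  rw [coeffSpan, Submodule.span_le]
  constructor
  · intro h i; exact h ⟨i, rfl⟩
  · rintro h _ ⟨i, rfl⟩; exact h i

lemma coeffSpan_zero : coeffSpan k (0 : Polynomial A) = ⊥ := by
  rw [eq_bot_iff, coeffSpan_le_iff]; simp

lemma coeffSpan_erase_le (f : Polynomial A) (m : ℕ) : coeffSpan k (f.erase m) ≤ coeffSpan k f := by
  rw [coeffSpan_le_iff]
  intro i
  rw [Polynomial.coeff_erase]
  split_ifs
  · exact zero_mem _
  · exact coeff_mem_coeffSpan f i

lemma coeffSpan_le_erase_sup (f : Polynomial A) (m : ℕ) :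
    coeffSpan k f ≤ coeffSpan k (f.erase m) ⊔ Submodule.span k {f.coeff m} := by
  rw [coeffSpan_le_iff]
  intro i
  by_cases h : i = m
  · subst h
    exact Submodule.mem_sup_right (Submodule.mem_span_singleton_self _)
  · apply Submodule.mem_sup_left
    have := coeff_mem_coeffSpan (k := k) (f.erase m) i
    rwa [Polynomial.coeff_erase, if_neg h] at this

lemma erase_degree_lt {f : Polynomial A} {m : ℕ} (h : f.degree < (m + 1 : ℕ)) :
    (f.erase m).degree < (m : ℕ) := by
  rw [Polynomial.degree_lt_iff_coeff_zero] at h ⊢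
  intro i hi
  rw [Polynomial.coeff_erase]
  split_ifs with hm
  · rfl
  · exact h i (by omega)

/-- The Dedekind–Mertens lemma for spans of coefficients (instead of the ideals they generate).
The double induction removes the top coefficients of `g` and of `f`. -/
lemma coeffSpan_dedekindMertens_aux (l : ℕ) :
    ∀ (f g : Polynomial A), g.degree < (l : ℕ) →
      coeffSpan k f ^ l * coeffSpan k g ≤ coeffSpan k f ^ (l - 1) * coeffSpan k (f * g) := by
  induction l with
  | zero =>
    intro f g hg
    have : g = 0 := by
      rw [Polynomial.degree_lt_iff_coeff_zero] at hg
      ext i; simpa using hg i (Nat.zero_le _)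
    subst this
    simp [coeffSpan_zero]
  | succ l ihl =>
    intro f g hg
    rw [Nat.add_sub_cancel]
    obtain ⟨M, hM⟩ : ∃ M : ℕ, f.degree < M :=
      ⟨f.natDegree + 1, Polynomial.degree_lt_iff_coeff_zero _ _ |>.2 fun i hi =>
        Polynomial.coeff_eq_zero_of_natDegree_lt (by omega)⟩
    induction M generalizing f with
    | zero =>
      have : f = 0 := by
        rw [Polynomial.degree_lt_iff_coeff_zero] at hM
        ext i; simpa using hM i (Nat.zero_le _)
      subst this
      simp [coeffSpan_zero]
    | succ M ihM =>
      set a := f.coeff M with ha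
      set c := g.coeff l with hc
      have hac : a * c ∈ coeffSpan k (f * g) := by
        have : (f * g).coeff (M + l) = a * c := by
          apply Polynomial.coeff_mul_add_eq_of_natDegree_le
          · exact Polynomial.natDegree_le_iff_degree_le.2 (Order.lt_succ_iff.1 hM)
          · exact Polynomial.natDegree_le_iff_degree_le.2 (Order.lt_succ_iff.1 hg)
        rw [← this]; exact coeff_mem_coeffSpan _ _
      -- multiplying by the top coefficient `a` of `f` one may also discard that of `g`
      have key : Submodule.span k {a} * (coeffSpan k f ^ l * coeffSpan k g) ≤
          coeffSpan k f ^ l * coeffSpan k (f * g) := by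
        have h1 : Submodule.span k {a} * (coeffSpan k f ^ l * coeffSpan k (g.erase l)) ≤
            coeffSpan k f ^ l * coeffSpan k (f * g) := by
          refine (mul_le_mul_right (ihl f _ (erase_degree_lt hg)) _).trans ?_
          cases l with
          | zero =>
            have : g.erase 0 = 0 := by
              have := erase_degree_lt hg
              rw [Polynomial.degree_lt_iff_coeff_zero] at this
              ext i; simpa using this i (Nat.zero_le _)
            simp [this, coeffSpan_zero]
          | succ l =>
            have h2 : Submodule.span k {a} * coeffSpan k (f * g.erase (l + 1)) ≤
                coeffSpan k f * coeffSpan k (f * g) := by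
              rw [coeffSpan, Submodule.span_mul_span, Submodule.span_le]
              rintro _ ⟨_, rfl, _, ⟨i, rfl⟩, rfl⟩
              have h3 : a * (f * g.erase (l + 1)).coeff i =
                  a * (f * g).coeff i - (f * Polynomial.X ^ (l + 1)).coeff i * (a * c) := by
                conv_rhs => rw [← Polynomial.monomial_add_erase g (l + 1)]
                rw [← hc, mul_add, Polynomial.coeff_add, ← Polynomial.C_mul_X_pow_eq_monomial,
                  mul_left_comm, Polynomial.coeff_C_mul]
                ring
              change a * (f * g.erase (l + 1)).coeff i ∈ _
              rw [h3]
              refine sub_mem (Submodule.mul_mem_mul (coeff_mem_coeffSpan _ _)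
                (coeff_mem_coeffSpan _ _)) (Submodule.mul_mem_mul ?_ hac)
              rw [Polynomial.coeff_mul_X_pow']
              split_ifs
              · exact coeff_mem_coeffSpan _ _
              · exact zero_mem _
            rw [Nat.add_sub_cancel, mul_left_comm]
            refine (mul_le_mul_right h2 _).trans (le_of_eq ?_)
            rw [pow_succ, mul_assoc]
        refine (mul_le_mul_right (mul_le_mul_right (coeffSpan_le_erase_sup g l) _) _).trans ?_
        rw [Submodule.mul_sup, Submodule.mul_sup]
        refine sup_le h1 ?_
        rw [mul_left_comm]
        refine mul_le_mul_right ?_ _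
        rw [Submodule.span_mul_span, Submodule.span_le]
        rintro _ ⟨_, rfl, _, rfl, rfl⟩
        exact hac
      have h4 : coeffSpan k (f.erase M) ^ (l + 1) * coeffSpan k g ≤
          coeffSpan k f ^ l * coeffSpan k (f * g) := by
        refine (ihM _ (erase_degree_lt hM)).trans ?_
        refine (mul_le_mul_left (pow_le_pow_left' (coeffSpan_erase_le f M) l) _).trans ?_
        have h5 : coeffSpan k (f.erase M * g) ≤
            coeffSpan k (f * g) ⊔ Submodule.span k {a} * coeffSpan k g := by
          rw [coeffSpan_le_iff]
          intro i
          have h3 : (f.erase M * g).coeff i =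
              (f * g).coeff i - a * (g * Polynomial.X ^ M).coeff i := by
            conv_rhs => rw [← Polynomial.monomial_add_erase f M]
            rw [← ha, add_mul, Polynomial.coeff_add, ← Polynomial.C_mul_X_pow_eq_monomial,
              mul_assoc, Polynomial.coeff_C_mul, mul_comm _ g]
            ring_nf
          rw [h3]
          refine sub_mem (Submodule.mem_sup_left (coeff_mem_coeffSpan _ _))
            (Submodule.mem_sup_right (Submodule.mul_mem_mul
              (Submodule.mem_span_singleton_self _) ?_))
          rw [Polynomial.coeff_mul_X_pow']
          split_ifs
          · exact coeff_mem_coeffSpan _ _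
          · exact zero_mem _
        refine (mul_le_mul_right h5 _).trans ?_
        rw [Submodule.mul_sup]
        refine sup_le le_rfl ?_
        rw [mul_left_comm]
        exact key
      -- `V(f)^(l+1) ≤ V(f')^(l+1) + a V(f)^l`
      have h6 : ∀ j : ℕ, coeffSpan k f ^ (j + 1) ≤
          coeffSpan k (f.erase M) ^ (j + 1) ⊔ Submodule.span k {a} * coeffSpan k f ^ j := by
        intro j
        induction j with
        | zero => simpa using coeffSpan_le_erase_sup f M
        | succ j ihj =>
          rw [pow_succ]
          refine (mul_le_mul_left ihj _).trans ?_
          rw [Submodule.sup_mul]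
          refine sup_le ?_ (le_sup_of_le_right (le_of_eq (by rw [mul_assoc, pow_succ])))
          refine (mul_le_mul_right (coeffSpan_le_erase_sup f M) _).trans ?_
          rw [Submodule.mul_sup, ← pow_succ]
          refine sup_le le_sup_left (le_sup_of_le_right ?_)
          rw [mul_comm]
          exact mul_le_mul_right (pow_le_pow_left' (coeffSpan_erase_le f M) _) _
      refine (mul_le_mul_left (h6 l) _).trans ?_
      rw [Submodule.sup_mul, mul_assoc]
      exact sup_le h4 key

/-- If `deg g ≤ l ≤ t` then `V(f)^(t+1) V(g) ≤ V(f)^t V(fg)`, where `V` is the span of the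
coefficients. -/
lemma coeffSpan_dedekindMertens {l t : ℕ} (hlt : l ≤ t) (f g : Polynomial A)
    (hg : g.natDegree ≤ l) :
    coeffSpan k f ^ t * (coeffSpan k f * coeffSpan k g) ≤
      coeffSpan k f ^ t * coeffSpan k (f * g) := by
  have h := coeffSpan_dedekindMertens_aux (k := k) (t + 1) f g (by
    rw [Polynomial.degree_lt_iff_coeff_zero]
    intro i hi
    exact Polynomial.coeff_eq_zero_of_natDegree_lt (by omega))
  rwa [Nat.add_sub_cancel, pow_succ, mul_assoc] at h

end DedekindMertens

/-! ### Lowest exponents -/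

/-- The polynomial `F` has no monomial lexicographically below `α` (the first variable counting
most), and its coefficient at `α`, possibly zero, is `c`. -/
def LowestAt {n : ℕ} {R : Type*} [CommRing R] (F : MvPolynomial (Fin n) R) (α : Fin n →₀ ℕ)
    (c : R) : Prop :=
  (∀ β, toLex β < toLex α → F.coeff β = 0) ∧ F.coeff α = c

namespace LowestAt

variable {n : ℕ} {R : Type*} [CommRing R] {F G : MvPolynomial (Fin n) R} {α β : Fin n →₀ ℕ}
  {c d : R}

lemma zero (α : Fin n →₀ ℕ) : LowestAt (0 : MvPolynomial (Fin n) R) α 0 := by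
  constructor <;> simp

lemma one : LowestAt (1 : MvPolynomial (Fin n) R) 0 1 := by
  constructor
  · intro β hβ
    have : β ≠ 0 := fun h => by simp [h] at hβ
    rw [MvPolynomial.coeff_one, if_neg this.symm]
  · simp

lemma add (hF : LowestAt F α c) (hG : LowestAt G α d) : LowestAt (F + G) α (c + d) := by
  constructor
  · intro β hβ
    rw [MvPolynomial.coeff_add, hF.1 β hβ, hG.1 β hβ, add_zero]
  · rw [MvPolynomial.coeff_add, hF.2, hG.2]

lemma mul (hF : LowestAt F α c) (hG : LowestAt G β d) : LowestAt (F * G) (α + β) (c * d) := by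
  constructor
  · intro γ hγ
    rw [MvPolynomial.coeff_mul]
    refine Finset.sum_eq_zero fun p hp => ?_
    rw [Finset.HasAntidiagonal.mem_antidiagonal] at hp
    by_cases h : toLex p.1 < toLex α
    · rw [hF.1 _ h, zero_mul]
    · by_cases h' : toLex p.2 < toLex β
      · rw [hG.1 _ h', mul_zero]
      · exfalso
        rw [not_lt] at h h'
        have := add_le_add h h'
        rw [← toLex_add, ← toLex_add, hp] at this
        exact absurd hγ (not_lt.2 this)
  · rw [MvPolynomial.coeff_mul, Finset.sum_eq_single (α, β)]
    · rw [hF.2, hG.2]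
    · intro p hp hne
      rw [Finset.HasAntidiagonal.mem_antidiagonal] at hp
      by_cases h : toLex p.1 < toLex α
      · rw [hF.1 _ h, zero_mul]
      · by_cases h' : toLex p.2 < toLex β
        · rw [hG.1 _ h', mul_zero]
        · exfalso
          rw [not_lt] at h h'
          rcases h.lt_or_eq with h1 | h1
          · have := add_lt_add_of_lt_of_le h1 h'
            rw [← toLex_add, ← toLex_add, hp] at this
            exact lt_irrefl _ this
          · have h2 : α = p.1 := toLex.injective h1
            rw [h2] at hp
            exact hne (Prod.ext h2.symm (add_left_cancel hp))
    · intro h; simp at h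

lemma prod {ι : Type*} (s : Finset ι) (F : ι → MvPolynomial (Fin n) R) (α : ι → Fin n →₀ ℕ)
    (c : ι → R) (h : ∀ i ∈ s, LowestAt (F i) (α i) (c i)) :
    LowestAt (∏ i ∈ s, F i) (∑ i ∈ s, α i) (∏ i ∈ s, c i) := by
  classical
  induction s using Finset.induction_on with
  | empty => simpa using one
  | insert i s hi ih =>
    rw [Finset.prod_insert hi, Finset.sum_insert hi, Finset.prod_insert hi]
    exact (h i (Finset.mem_insert_self _ _)).mul
      (ih fun j hj => h j (Finset.mem_insert_of_mem hj))

lemma pow (h : LowestAt F α c) (m : ℕ) : LowestAt (F ^ m) (m • α) (c ^ m) := by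
  simpa using prod (Finset.range m) (fun _ => F) (fun _ => α) (fun _ => c) (fun _ _ => h)

lemma unique (hF : LowestAt F α c) (hF' : LowestAt F β d) (hc : c ≠ 0) (hd : d ≠ 0) : α = β := by
  rcases lt_trichotomy (toLex α) (toLex β) with h | h | h
  · exact absurd (hF.2.symm.trans (hF'.1 _ h)) hc
  · exact toLex.injective h
  · exact absurd (hF'.2.symm.trans (hF.1 _ h)) hd

lemma exists_of_ne_zero (hF : F ≠ 0) : ∃ α c, c ≠ 0 ∧ LowestAt F α c := by
  obtain ⟨α, hα, hmin⟩ := Finset.exists_min_image F.support toLex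
    (MvPolynomial.support_nonempty.2 hF)
  refine ⟨α, F.coeff α, MvPolynomial.mem_support_iff.1 hα, ?_, rfl⟩
  intro β hβ
  by_contra h
  exact absurd hβ (not_lt.2 (hmin β (MvPolynomial.mem_support_iff.2 h)))

end LowestAt

/-- A polynomial in the `x_i` and `y_i`, viewed as a polynomial in the `x_i` over the ring of
polynomials in the `y_i`. -/
abbrev inX (n : ℕ) : PolyRing n ≃ₐ[ℂ] MvPolynomial (Fin n) (MvPolynomial (Fin n) ℂ) :=
  MvPolynomial.sumAlgEquiv ℂ (Fin n) (Fin n)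

lemma inX_monomial {n : ℕ} (d : Fin n ⊕ Fin n →₀ ℕ) (c : ℂ) :
    inX n (MvPolynomial.monomial d c) =
      MvPolynomial.monomial (d.comapDomain Sum.inl Sum.inl_injective.injOn)
        (MvPolynomial.monomial (d.comapDomain Sum.inr Sum.inr_injective.injOn) c) := by
  rw [MvPolynomial.monomial_eq, map_mul, MvPolynomial.sumAlgEquiv_C_inl,
    MvPolynomial.monomial_eq, MvPolynomial.monomial_eq]
  rw [Finsupp.prod_fintype _ _ (fun _ => pow_zero _), Finsupp.prod_fintype _ _ (fun _ => pow_zero _),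
    Finsupp.prod_fintype _ _ (fun _ => pow_zero _)]
  rw [map_prod, Fintype.prod_sum_type]
  simp only [map_pow, MvPolynomial.sumAlgEquiv_X_inl, MvPolynomial.sumAlgEquiv_X_inr,
    Finsupp.comapDomain_apply, map_mul, map_prod]
  ring

lemma coeff_coeff_inX {n : ℕ} (f : PolyRing n) (d : Fin n ⊕ Fin n →₀ ℕ) :
    ((inX n f).coeff (d.comapDomain Sum.inl Sum.inl_injective.injOn)).coeff
      (d.comapDomain Sum.inr Sum.inr_injective.injOn) = f.coeff d := by
  induction f using MvPolynomial.induction_on' with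
  | monomial e c =>
    rw [inX_monomial, MvPolynomial.coeff_monomial, MvPolynomial.coeff_monomial]
    by_cases h : e = d
    · simp [h]
    · rw [if_neg h]
      split_ifs with h1
      · rw [MvPolynomial.coeff_monomial, if_neg]
        intro h2
        apply h
        ext v
        rcases v with v | v
        · simpa using DFunLike.congr_fun h1 v
        · simpa using DFunLike.congr_fun h2 v
      · simp
  | add p q hp hq => rw [map_add, MvPolynomial.coeff_add, MvPolynomial.coeff_add, hp, hq,
      MvPolynomial.coeff_add]

/-- The exponent vector with `x`-part `α` and `y`-part `β`. -/
def joinExp {n : ℕ} (α β : Fin n → ℕ) : Fin n ⊕ Fin n →₀ ℕ :=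
  Finsupp.equivFunOnFinite.symm (Sum.elim α β)

lemma coeff_joinExp {n : ℕ} (f : PolyRing n) (α β : Fin n →₀ ℕ) :
    f.coeff (joinExp α β) = ((inX n f).coeff α).coeff β := by
  rw [← coeff_coeff_inX]
  congr 2 <;> (ext; simp [joinExp])

lemma joinExp_surj {n : ℕ} (d : Fin n ⊕ Fin n →₀ ℕ) :
    ∃ α β : Fin n →₀ ℕ, d = joinExp α β :=
  ⟨d.comapDomain Sum.inl Sum.inl_injective.injOn, d.comapDomain Sum.inr Sum.inr_injective.injOn, by
    ext v; rcases v with v | v <;> simp [joinExp]⟩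

lemma toLex_lt_iff {n : ℕ} (α β : Fin n →₀ ℕ) :
    toLex α < toLex β ↔ ∃ i, (∀ j < i, α j = β j) ∧ α i < β i := Iff.rfl

lemma isTrailingExp_iff {n : ℕ} (f : PolyRing n) (α β : Fin n →₀ ℕ) :
    IsTrailingExp n f (joinExp α β) ↔
      ∃ g c, c ≠ 0 ∧ LowestAt (inX n f) α g ∧ LowestAt g β c := by
  constructor
  · rintro ⟨-, hd, hmin⟩
    rw [MvPolynomial.mem_support_iff, coeff_joinExp] at hd
    refine ⟨_, _, hd, ⟨?_, rfl⟩, ?_, rfl⟩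
    · intro α' hα'
      ext β'
      rw [MvPolynomial.coeff_zero]
      by_contra h
      rw [← coeff_joinExp] at h
      obtain ⟨i, hi, hlt⟩ := (toLex_lt_iff _ _).1 hα'
      obtain ⟨v, hv, hw⟩ := hmin _ (MvPolynomial.mem_support_iff.2 h) (by
        intro h2
        have := DFunLike.congr_fun h2 (Sum.inl i)
        simp [joinExp] at this
        omega)
      rcases v with k | k
      · rcases lt_trichotomy k i with h1 | h1 | h1
        · have := hi k h1; simp [joinExp] at hv; omega
        · subst h1; simp [joinExp] at hv; omega
        · have := hw (Sum.inl i) h1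
          simp [joinExp] at this; omega
      · have := hw (Sum.inl i) (by simp only [varIdx]; omega)
        simp [joinExp] at this; omega
    · intro β' hβ'
      by_contra h
      rw [← coeff_joinExp] at h
      obtain ⟨i, hi, hlt⟩ := (toLex_lt_iff _ _).1 hβ'
      obtain ⟨v, hv, hw⟩ := hmin _ (MvPolynomial.mem_support_iff.2 h) (by
        intro h2
        have := DFunLike.congr_fun h2 (Sum.inr i)
        simp [joinExp] at this
        omega)
      rcases v with k | k
      · simp [joinExp] at hv
      · rcases lt_trichotomy k i with h1 | h1 | h1
        · have := hi k h1; simp [joinExp] at hv; omega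
        · subst h1; simp [joinExp] at hv; omega
        · have := hw (Sum.inr i) (by simp only [varIdx]; omega)
          simp [joinExp] at this; omega
  · rintro ⟨g, c, hc, ⟨h1, h2⟩, h3, h4⟩
    have hne : f.coeff (joinExp α β) ≠ 0 := by rw [coeff_joinExp, h2, h4]; exact hc
    refine ⟨fun h => by simp [h] at hne, MvPolynomial.mem_support_iff.2 hne, ?_⟩
    intro e he hned
    obtain ⟨α', β', rfl⟩ := joinExp_surj e
    rw [MvPolynomial.mem_support_iff, coeff_joinExp] at he
    rcases lt_trichotomy (toLex α) (toLex α') with h | h | h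
    · obtain ⟨i, hi, hlt⟩ := (toLex_lt_iff _ _).1 h
      refine ⟨Sum.inl i, by simpa [joinExp] using hlt, ?_⟩
      rintro (k | k) hk
      · simpa [joinExp] using hi k hk
      · simp only [varIdx] at hk; omega
    · have h : α = α' := toLex.injective h
      subst h
      rw [h2] at he
      rcases lt_trichotomy (toLex β) (toLex β') with h | h | h
      · obtain ⟨i, hi, hlt⟩ := (toLex_lt_iff _ _).1 h
        refine ⟨Sum.inr i, by simpa [joinExp] using hlt, ?_⟩
        rintro (k | k) hk
        · simp [joinExp]
        · simp only [varIdx] at hk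
          simpa [joinExp] using hi k (by rw [Fin.lt_def]; omega)
      · exact absurd (by rw [toLex.injective h]) hned
      · exact absurd (h3 _ h) he
    · exact absurd (by rw [h1 _ h, MvPolynomial.coeff_zero]) he

/-! ### Vanishing order of polynomials with few coefficients -/

lemma ideal_sup_pow_le {R : Type*} [CommRing R] (I J : Ideal R) (m e : ℕ) :
    (I ⊔ J) ^ (m + e) ≤ I ^ m ⊔ J ^ (e + 1) := by
  induction m generalizing e with
  | zero => simp
  | succ m ihm =>
    induction e with
    | zero =>
      rw [add_zero, pow_succ']
      rw [Ideal.sup_mul]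
      refine sup_le ?_ (le_sup_of_le_right (by simpa using (Ideal.mul_le_left : J * (I ⊔ J) ^ m ≤ J)))
      calc I * (I ⊔ J) ^ m ≤ I * (I ^ m ⊔ J ^ (0 + 1)) := Ideal.mul_mono_right (ihm 0)
        _ = I ^ (m + 1) ⊔ I * J ^ (0 + 1) := by rw [Ideal.mul_sup, pow_succ' I]
        _ ≤ _ := sup_le_sup_left Ideal.mul_le_right _
    | succ e ihe =>
      rw [← add_assoc, pow_succ', Ideal.sup_mul]
      refine sup_le ?_ ?_
      · calc I * (I ⊔ J) ^ (m + 1 + e) ≤ I * (I ^ m ⊔ J ^ (e + 1 + 1)) := by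
              rw [show m + 1 + e = m + (e + 1) by ring]
              exact Ideal.mul_mono_right (ihm (e + 1))
          _ = I ^ (m + 1) ⊔ I * J ^ (e + 1 + 1) := by rw [Ideal.mul_sup, pow_succ' I]
          _ ≤ _ := sup_le_sup_left Ideal.mul_le_right _
      · calc J * (I ⊔ J) ^ (m + 1 + e) ≤ J * (I ^ (m + 1) ⊔ J ^ (e + 1)) :=
              Ideal.mul_mono_right ihe
          _ = J * I ^ (m + 1) ⊔ J ^ (e + 1 + 1) := by rw [Ideal.mul_sup, pow_succ' J (e + 1)]
          _ ≤ _ := sup_le_sup_right Ideal.mul_le_right _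

/-- A polynomial supported in the degree window `[p, p + e]` that vanishes to order `m + e` at
`t = 0, X = 1` has all coefficients divisible by `t ^ m`: modulo `t ^ m`, it is a polynomial of
degree at most `e` (up to a power of `X`) divisible by `(X - 1) ^ (e + 1)`. -/
lemma pow_dvd_coeff_of_mem {R : Type*} [CommRing R] (t : R) (m e p : ℕ) (Φ : Polynomial R)
    (hΦ : Φ ∈ (Ideal.span {Polynomial.C t, Polynomial.X - 1}) ^ (m + e))
    (hlow : ∀ k < p, Φ.coeff k = 0) (hhigh : ∀ k, p + e < k → Φ.coeff k = 0) (k : ℕ) :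
    t ^ m ∣ Φ.coeff k := by
  classical
  open Polynomial in
  let I : Ideal R := Ideal.span {t ^ m}
  let π := Ideal.Quotient.mk I
  have h0 : Φ.map π = 0 := by
    rcases subsingleton_or_nontrivial (R ⧸ I) with hs | hs
    · exact Subsingleton.elim _ _
    have hmem := ideal_sup_pow_le (Ideal.span {(C t : R[X])}) (Ideal.span {(X - 1 : R[X])}) m e
      (by rwa [Ideal.span_insert] at hΦ)
    rw [Ideal.span_singleton_pow, Ideal.span_singleton_pow, ← Ideal.span_insert,
      Ideal.mem_span_pair] at hmem
    obtain ⟨A, B, hAB⟩ := hmem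
    have hd : (X - C 1 : (R ⧸ I)[X]) ^ (e + 1) ∣ Φ.map π := by
      rw [← hAB]
      have : π (t ^ m) = 0 := Ideal.Quotient.eq_zero_iff_mem.2 (Ideal.mem_span_singleton_self _)
      rw [Polynomial.map_add, Polynomial.map_mul, Polynomial.map_mul, Polynomial.map_pow,
        Polynomial.map_pow, Polynomial.map_C, ← C_pow, ← map_pow π, this]
      simp
    obtain ⟨F, hF⟩ : (X : (R ⧸ I)[X]) ^ p ∣ Φ.map π := by
      rw [X_pow_dvd_iff]
      intro d hd
      rw [coeff_map, hlow d hd, map_zero]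
    rw [hF] at hd
    have hcop : IsCoprime ((X - C 1 : (R ⧸ I)[X]) ^ (e + 1)) (X ^ p) :=
      IsCoprime.pow ⟨-1, 1, by simp⟩
    have hd' := hcop.dvd_of_dvd_mul_left hd
    have hF0 : F = 0 := by
      by_contra hne
      refine ((monic_X_sub_C (1 : R ⧸ I)).pow (e + 1)).not_dvd_of_natDegree_lt hne ?_ hd'
      rw [(monic_X_sub_C (1 : R ⧸ I)).natDegree_pow, natDegree_X_sub_C]
      rw [mul_one, Nat.lt_succ_iff, natDegree_le_iff_coeff_eq_zero]
      intro N hN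
      have := congrArg (fun q => coeff q (N + p)) hF
      simp only [coeff_X_pow_mul, coeff_map] at this
      rw [← this, hhigh _ (by omega), map_zero]
    rw [hF, hF0, mul_zero]
  rw [← Ideal.mem_span_singleton, ← Ideal.Quotient.eq_zero_iff_mem, ← Polynomial.coeff_map, h0,
    Polynomial.coeff_zero]

/-! ### Vanishing of the lowest `x`-coefficient along `y_i = y_j` -/

lemma rename_of_mem_Ar {n r : ℕ} {f : PolyRing n} (hf : f ∈ Ar n r) (σ : Equiv.Perm (Fin n)) :
    MvPolynomial.rename (Equiv.sumCongr σ σ) f = (((Equiv.Perm.sign σ : ℤ) : ℂ) ^ r) • f := by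
  induction hf using Submodule.span_induction with
  | mem f hf =>
    obtain ⟨g, hg, rfl⟩ := hf
    rw [map_prod, Finset.prod_congr rfl fun m _ => hg m σ, Finset.prod_smul]
    simp
  | zero => simp
  | add f g _ _ hf hg => rw [map_add, hf, hg, smul_add]
  | smul c f _ hf => rw [map_smul, hf, smul_comm]

lemma inX_rename {n : ℕ} (σ : Equiv.Perm (Fin n)) (f : PolyRing n) :
    inX n (MvPolynomial.rename (Equiv.sumCongr σ σ) f) =
      MvPolynomial.rename σ (MvPolynomial.map (MvPolynomial.rename σ).toRingHom (inX n f)) := by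
  induction f using MvPolynomial.induction_on with
  | C c =>
    rw [MvPolynomial.rename_C, MvPolynomial.sumAlgEquiv_C_inl]
    simp
  | add p q hp hq => simp only [map_add, hp, hq]
  | mul_X p v hp =>
    rcases v with v | v <;>
    simp [hp, MvPolynomial.sumAlgEquiv_X_inl, MvPolynomial.sumAlgEquiv_X_inr]

lemma coeff_inX_rename {n : ℕ} (σ : Equiv.Perm (Fin n)) (f : PolyRing n) (α : Fin n →₀ ℕ) :
    (inX n (MvPolynomial.rename (Equiv.sumCongr σ σ) f)).coeff (α.mapDomain σ) =
      MvPolynomial.rename σ ((inX n f).coeff α) := by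
  rw [inX_rename, MvPolynomial.coeff_rename_mapDomain _ σ.injective, MvPolynomial.coeff_map]
  rfl

/-- The coefficients of an element of `A ^ r` at rearranged exponents are rearrangements of each
other, up to sign. -/
lemma rename_coeff_of_mem_Ar {n r : ℕ} {f : PolyRing n} (hf : f ∈ Ar n r)
    (σ : Equiv.Perm (Fin n)) (α : Fin n →₀ ℕ) :
    MvPolynomial.rename σ ((inX n f).coeff α) =
      (((Equiv.Perm.sign σ : ℤ) : ℂ) ^ r) • (inX n f).coeff (α.mapDomain σ) := by
  rw [← coeff_inX_rename, rename_of_mem_Ar hf, map_smul, MvPolynomial.coeff_smul]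

lemma coeff_mapDomain_eq_zero {n r : ℕ} {f : PolyRing n} (hf : f ∈ Ar n r)
    (σ : Equiv.Perm (Fin n)) (α : Fin n →₀ ℕ) (h : (inX n f).coeff (α.mapDomain σ) = 0) :
    (inX n f).coeff α = 0 := by
  have := rename_coeff_of_mem_Ar hf σ α
  rw [h, smul_zero] at this
  exact (map_eq_zero_iff _ (MvPolynomial.rename_injective _ σ.injective)).1 this

lemma mapDomain_swap_apply {n : ℕ} (i j : Fin n) (α : Fin n →₀ ℕ) (k : Fin n) :
    α.mapDomain (Equiv.swap i j) k = α (Equiv.swap i j k) := by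
  rw [← Finsupp.equivMapDomain_eq_mapDomain, Finsupp.equivMapDomain_apply, Equiv.symm_swap]

lemma monotone_of_lowestAt {n r : ℕ} {f : PolyRing n} (hf : f ∈ Ar n r) {a : Fin n →₀ ℕ}
    {g : MvPolynomial (Fin n) ℂ} (hg : g ≠ 0) (h : LowestAt (inX n f) a g) : Monotone a := by
  intro i j hij
  rcases hij.eq_or_lt with rfl | hij
  · rfl
  by_contra hlt
  rw [not_le] at hlt
  apply hg
  rw [← h.2]
  apply coeff_mapDomain_eq_zero hf (Equiv.swap i j)
  apply h.1
  refine (toLex_lt_iff _ _).2 ⟨i, fun k hk => ?_, ?_⟩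
  · rw [mapDomain_swap_apply, Equiv.swap_apply_of_ne_of_ne hk.ne (hk.trans hij).ne]
  · rw [mapDomain_swap_apply, Equiv.swap_apply_left]; exact hlt

/-- The substitution `x_i ↦ X x_j` with a new scalar variable `X`. -/
def collide {n : ℕ} (i j : Fin n) : MvPolynomial (Fin n) (MvPolynomial (Fin n) ℂ) →+*
    MvPolynomial (Fin n) (Polynomial (MvPolynomial (Fin n) ℂ)) :=
  MvPolynomial.eval₂Hom (MvPolynomial.C.comp Polynomial.C) fun k =>
    if k = i then MvPolynomial.C Polynomial.X * MvPolynomial.X j else MvPolynomial.X k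

lemma collide_X_self {n : ℕ} (i j : Fin n) : collide i j (MvPolynomial.X i) =
    MvPolynomial.C Polynomial.X * MvPolynomial.X j := by simp [collide]

lemma collide_X_ne {n : ℕ} (i j : Fin n) {k : Fin n} (h : k ≠ i) :
    collide i j (MvPolynomial.X k) = MvPolynomial.X k := by simp [collide, h]

lemma collide_C {n : ℕ} (i j : Fin n) (c : MvPolynomial (Fin n) ℂ) :
    collide i j (MvPolynomial.C c) = MvPolynomial.C (Polynomial.C c) := by simp [collide]

lemma collide_monomial {n : ℕ} (i j : Fin n) (α : Fin n →₀ ℕ) (c : MvPolynomial (Fin n) ℂ) :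
    collide i j (MvPolynomial.monomial α c) =
      MvPolynomial.monomial (Finsupp.single j (α i) + α.erase i)
        (Polynomial.C c * Polynomial.X ^ α i) := by
  have h1 : collide i j (MvPolynomial.monomial (α.erase i) c) =
      MvPolynomial.monomial (α.erase i) (Polynomial.C c) := by
    rw [MvPolynomial.monomial_eq (a := Polynomial.C c), collide, MvPolynomial.coe_eval₂Hom,
      MvPolynomial.eval₂_monomial]
    congr 1
    refine Finsupp.prod_congr fun k hk => ?_
    rw [if_neg]
    rintro rfl
    simp at hk
  conv_lhs => rw [← Finsupp.single_add_erase i α, MvPolynomial.monomial_single_add, map_mul, h1,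
    map_pow, collide_X_self]
  rw [mul_pow, mul_assoc, ← MvPolynomial.monomial_single_add, ← MvPolynomial.C_pow,
    MvPolynomial.C_mul_monomial, mul_comm]

/-- After the substitution `x_i ↦ X x_j`, the coefficient of `x^γ X^k` collects exactly one
monomial: the one where `x_i` has exponent `k` and `x_j` the rest. -/
lemma coeff_coeff_collide {n : ℕ} {i j : Fin n} (hij : i ≠ j)
    (F : MvPolynomial (Fin n) (MvPolynomial (Fin n) ℂ)) (γ : Fin n →₀ ℕ) (hγ : γ i = 0) (k : ℕ) :
    ((collide i j F).coeff γ).coeff k =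
      if k ≤ γ j then F.coeff ((γ.update i k).update j (γ j - k)) else 0 := by
  classical
  induction F using MvPolynomial.induction_on' with
  | monomial α c =>
    rw [collide_monomial, MvPolynomial.coeff_monomial, MvPolynomial.coeff_monomial]
    by_cases h : Finsupp.single j (α i) + α.erase i = γ
    · have hj : γ j = α i + α j := by
        rw [← h]; simp [Finsupp.erase_ne hij.symm]
      rw [if_pos h, Polynomial.coeff_C_mul, Polynomial.coeff_X_pow]
      by_cases hk : k = α i
      · rw [if_pos hk, if_pos (show k ≤ γ j by omega), if_pos, mul_one]
        ext v
        by_cases hvj : v = j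
        · subst hvj; simp; omega
        · by_cases hvi : v = i
          · subst hvi; simp [Finsupp.update, hvj, hk]
          · rw [← h]; simp [Finsupp.update, hvi, hvj]
      · rw [if_neg hk, mul_zero]
        split_ifs with h1 h2
        · have := DFunLike.congr_fun h2 i
          simp [Finsupp.update, hij] at this
          omega
        · rfl
        · rfl
    · rw [if_neg h, Polynomial.coeff_zero]
      split_ifs with h1 h2
      · exfalso
        apply h
        have hi := DFunLike.congr_fun h2 i
        have hj := DFunLike.congr_fun h2 j
        simp [Finsupp.update, hij] at hi hj
        ext v
        by_cases hvj : v = j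
        · subst hvj; simp [Finsupp.erase_ne hij.symm]; omega
        · by_cases hvi : v = i
          · subst hvi; simp [hγ, hij.symm]
          · have := DFunLike.congr_fun h2 v
            simp [Finsupp.update, hvi, hvj] at this
            simp [hvi, Ne.symm hvj, this]
      · rfl
      · rfl
  | add p q hp hq =>
    rw [map_add, MvPolynomial.coeff_add, Polynomial.coeff_add, hp, hq, MvPolynomial.coeff_add]
    split_ifs <;> simp

/-- If a ring homomorphism does not distinguish the indices `i` and `j` modulo the ideal `K`, then
it maps alternating polynomials into `K`. -/
lemma map_mem_of_isAlternating {n : ℕ} {S : Type*} [CommRing S] (K : Ideal S)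
    (φ : PolyRing n →+* S) {i j : Fin n} (hij : i ≠ j)
    (hx : φ (MvPolynomial.X (Sum.inl i)) - φ (MvPolynomial.X (Sum.inl j)) ∈ K)
    (hy : φ (MvPolynomial.X (Sum.inr i)) - φ (MvPolynomial.X (Sum.inr j)) ∈ K)
    {h : PolyRing n} (hh : IsAlternating n h) : φ h ∈ K := by
  have hx' := (Ideal.Quotient.mk_eq_mk_iff_sub_mem _ _).2 hx
  have hy' := (Ideal.Quotient.mk_eq_mk_iff_sub_mem _ _).2 hy
  let τ : PolyRing n →+* PolyRing n :=
    (MvPolynomial.rename (Equiv.sumCongr (Equiv.swap i j) (Equiv.swap i j))).toRingHom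
  have key : ((Ideal.Quotient.mk K).comp φ).comp τ = (Ideal.Quotient.mk K).comp φ := by
    apply MvPolynomial.ringHom_ext
    · intro c
      simp only [τ, RingHom.comp_apply, AlgHom.toRingHom_eq_coe, RingHom.coe_coe,
        MvPolynomial.rename_C]
    · intro v
      simp only [τ, RingHom.comp_apply, AlgHom.toRingHom_eq_coe, RingHom.coe_coe,
        MvPolynomial.rename_X, Equiv.sumCongr_apply]
      rcases v with v | v
      · rw [Sum.map_inl]
        by_cases hvi : v = i
        · subst hvi
          rw [Equiv.swap_apply_left]; exact hx'.symm
        · by_cases hvj : v = j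
          · subst hvj
            rw [Equiv.swap_apply_right]; exact hx'
          · rw [Equiv.swap_apply_of_ne_of_ne hvi hvj]
      · rw [Sum.map_inr]
        by_cases hvi : v = i
        · subst hvi
          rw [Equiv.swap_apply_left]; exact hy'.symm
        · by_cases hvj : v = j
          · subst hvj
            rw [Equiv.swap_apply_right]; exact hy'
          · rw [Equiv.swap_apply_of_ne_of_ne hvi hvj]
  have h1 := RingHom.congr_fun key h
  have h2 : τ h = - h := by
    have := hh (Equiv.swap i j)
    rw [Equiv.Perm.sign_swap hij] at this
    refine Eq.trans this ?_
    simp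
  rw [RingHom.comp_apply, h2, RingHom.comp_apply, RingHom.comp_apply, map_neg,
    Ideal.Quotient.mk_eq_mk_iff_sub_mem] at h1
  have h4 := K.mul_mem_left (φ (MvPolynomial.C (-(1 / 2) : ℂ))) h1
  have h5 : φ (MvPolynomial.C (-(1 / 2) : ℂ)) * (-2) = 1 := by
    have : (-2 : S) = φ (MvPolynomial.C (-2 : ℂ)) := by simp only [map_neg, map_ofNat]
    rw [this, ← map_mul, ← map_mul]; norm_num
  convert h4 using 1
  linear_combination (-(φ h)) * h5

lemma collide_mem_of_isAlternating {n : ℕ} {i j : Fin n} (hij : i ≠ j) {h : PolyRing n}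
    (hh : IsAlternating n h) :
    collide i j (inX n h) ∈ Ideal.map MvPolynomial.C
      (Ideal.span {Polynomial.C (MvPolynomial.X i - MvPolynomial.X j : MvPolynomial (Fin n) ℂ),
        Polynomial.X - 1}) := by
  refine map_mem_of_isAlternating
    (S := MvPolynomial (Fin n) (Polynomial (MvPolynomial (Fin n) ℂ))) _ ((collide i j).comp (inX n : PolyRing n →+* _)) hij ?_ ?_ hh
  · simp only [RingHom.comp_apply, RingHom.coe_coe, MvPolynomial.sumAlgEquiv_X_inl]
    rw [collide_X_self, collide_X_ne _ _ hij.symm]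
    have hX := Ideal.mem_map_of_mem (MvPolynomial.C (σ := Fin n)) (Ideal.subset_span
      (show Polynomial.X - 1 ∈ ({Polynomial.C (MvPolynomial.X i - MvPolynomial.X j :
        MvPolynomial (Fin n) ℂ), Polynomial.X - 1} : Set _) by simp))
    have := Ideal.mul_mem_right (MvPolynomial.X j) _ hX
    convert this using 1
    rw [MvPolynomial.C_sub, MvPolynomial.C_1]; ring
  · simp only [RingHom.comp_apply, RingHom.coe_coe, MvPolynomial.sumAlgEquiv_X_inr, collide_C]
    have hX := Ideal.mem_map_of_mem (MvPolynomial.C (σ := Fin n)) (Ideal.subset_span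
      (show Polynomial.C (MvPolynomial.X i - MvPolynomial.X j) ∈
        ({Polynomial.C (MvPolynomial.X i - MvPolynomial.X j :
        MvPolynomial (Fin n) ℂ), Polynomial.X - 1} : Set _) by simp))
    convert hX using 1
    rw [Polynomial.C_sub, MvPolynomial.C_sub]

lemma collide_mem_of_mem_Ar {n r : ℕ} {i j : Fin n} (hij : i ≠ j) {f : PolyRing n}
    (hf : f ∈ Ar n r) :
    collide i j (inX n f) ∈ (Ideal.map MvPolynomial.C
      (Ideal.span {Polynomial.C (MvPolynomial.X i - MvPolynomial.X j : MvPolynomial (Fin n) ℂ),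
        Polynomial.X - 1})) ^ r := by
  induction hf using Submodule.span_induction with
  | mem f hf =>
    obtain ⟨g, hg, rfl⟩ := hf
    rw [map_prod, map_prod]
    have := Ideal.prod_mem_prod (s := Finset.univ) (fun m _ => collide_mem_of_isAlternating hij (hg m))
    simpa using this
  | zero => simp
  | add f g _ _ hf hg => rw [map_add, map_add]; exact add_mem hf hg
  | smul c f _ hf =>
    rw [Algebra.smul_def, map_mul, map_mul]
    exact Ideal.mul_mem_left _ _ hf

/-- The lowest coefficient of an element of `A ^ r` vanishes on `y_i = y_j` to order at least
`r - (a_j - a_i)`. -/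
lemma pow_dvd_of_lowestAt {n r : ℕ} {f : PolyRing n} (hf : f ∈ Ar n r) {a : Fin n →₀ ℕ}
    {g : MvPolynomial (Fin n) ℂ} (h : LowestAt (inX n f) a g) {i j : Fin n} (hij : i < j)
    (haij : a i ≤ a j) :
    (MvPolynomial.X i - MvPolynomial.X j) ^ (r - (a j - a i)) ∣ g := by
  classical
  rcases le_or_gt r (a j - a i) with hr | hr
  · rw [Nat.sub_eq_zero_of_le hr, pow_zero]; exact one_dvd _
  -- `γ` is the image of `a` under the substitution: the total degree in `x_i, x_j` sits at `j`.
  set γ := (a.update i 0).update j (a i + a j) with hγ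
  have hγi : γ i = 0 := by simp [hγ, Finsupp.update, hij.ne]
  have hγj : γ j = a i + a j := by simp [hγ, Finsupp.update]
  have hγk : ∀ k, k ≠ i → k ≠ j → γ k = a k := by
    intro k h1 h2; simp [hγ, Finsupp.update, h1, h2]
  have hcoll := collide_mem_of_mem_Ar hij.ne hf
  rw [← Ideal.map_pow, MvPolynomial.mem_map_C_iff] at hcoll
  have hmem := hcoll γ
  have hc := coeff_coeff_collide hij.ne (inX n f) γ hγi
  -- A smaller exponent of `x_i` is below `a`; a larger one than `a j` is so after exchanging
  -- `i` and `j`.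
  have hlow : ∀ k < a i, ((collide i j (inX n f)).coeff γ).coeff k = 0 := by
    intro k hk
    rw [hc]
    split_ifs
    · apply h.1
      refine (toLex_lt_iff _ _).2 ⟨i, fun l hl => ?_, ?_⟩
      · simp [Finsupp.update, hl.ne, (hl.trans hij).ne, hγk]
      · simpa [Finsupp.update, hij.ne] using hk
    · rfl
  have hhigh : ∀ k, a i + (a j - a i) < k →
      ((collide i j (inX n f)).coeff γ).coeff k = 0 := by
    intro k hk
    rw [hc]
    split_ifs
    · apply coeff_mapDomain_eq_zero hf (Equiv.swap i j)
      apply h.1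
      refine (toLex_lt_iff _ _).2 ⟨i, fun l hl => ?_, ?_⟩
      · rw [mapDomain_swap_apply, Equiv.swap_apply_of_ne_of_ne hl.ne (hl.trans hij).ne]
        simp [Finsupp.update, hl.ne, (hl.trans hij).ne, hγk]
      · rw [mapDomain_swap_apply, Equiv.swap_apply_left]
        simp [Finsupp.update]
        omega
    · rfl
  have hr' : r - (a j - a i) + (a j - a i) = r := by omega
  rw [← hr'] at hmem
  have := pow_dvd_coeff_of_mem _ _ _ _ _ hmem hlow hhigh (a i)
  rw [hc, if_pos (by omega)] at this
  convert this
  rw [← h.2]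
  congr 1
  ext v
  by_cases hvj : v = j
  · subst hvj; simp [hγj]
  · by_cases hvi : v = i
    · subst hvi; simp [Finsupp.update, hvj]
    · simp [Finsupp.update, hvi, hvj, hγk]

/-! ### Products of differences and the necessary conditions -/

lemma lowestAt_X_sub_X {n : ℕ} {i j : Fin n} (hij : i < j) :
    LowestAt (MvPolynomial.X i - MvPolynomial.X j : MvPolynomial (Fin n) ℂ)
      (Finsupp.single j 1) (-1) := by
  have hne : Finsupp.single i 1 ≠ (Finsupp.single j 1 : Fin n →₀ ℕ) := by
    intro h
    exact hij.ne ((Finsupp.single_left_inj one_ne_zero).1 h)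
  constructor
  · intro β hβ
    rw [MvPolynomial.coeff_sub, MvPolynomial.coeff_X, MvPolynomial.coeff_X, if_neg, if_neg,
      sub_zero]
    · rintro rfl; exact lt_irrefl _ hβ
    · rintro rfl
      obtain ⟨k, hk, hlt⟩ := (toLex_lt_iff _ _).1 hβ
      have hkj : k = j := by
        by_contra h
        simp [h] at hlt
      have := hk i (hkj ▸ hij)
      simp [hij.ne] at this
  · rw [MvPolynomial.coeff_sub, MvPolynomial.coeff_X, MvPolynomial.coeff_X, if_neg hne, if_pos rfl,
      zero_sub]

/-- The product of the powers `(y_i - y_j) ^ (m i j)` over all `i < j`. -/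
def diffProd {n : ℕ} (m : Fin n → Fin n → ℕ) : MvPolynomial (Fin n) ℂ :=
  ∏ j, ∏ i ∈ Iio j, (MvPolynomial.X i - MvPolynomial.X j) ^ m i j

lemma lowestAt_diffProd {n : ℕ} (m : Fin n → Fin n → ℕ) :
    ∃ c, c ≠ 0 ∧ LowestAt (diffProd m)
      (Finsupp.equivFunOnFinite.symm fun j => ∑ i ∈ Iio j, m i j) c := by
  refine ⟨∏ j, ∏ i ∈ Iio j, (-1) ^ m i j, ?_, ?_⟩
  · exact Finset.prod_ne_zero_iff.2 fun j _ => Finset.prod_ne_zero_iff.2 fun i _ =>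
      pow_ne_zero _ (by norm_num)
  · have := LowestAt.prod univ _ _ _ fun j _ => LowestAt.prod (Iio j) _ _ _ fun i hi =>
      (lowestAt_X_sub_X (mem_Iio.1 hi)).pow (m i j)
    unfold diffProd
    convert this using 1
    ext k
    simp only [Finsupp.finsetSum_apply, Finsupp.smul_apply, Finsupp.equivFunOnFinite_symm_apply_apply]
    symm
    rw [Finset.sum_eq_single k]
    · simp
    · intro j _ hj
      simp [hj]
    · simp

lemma X_sub_X_ne_zero {n : ℕ} {i j : Fin n} (hij : i ≠ j) :
    (MvPolynomial.X i - MvPolynomial.X j : MvPolynomial (Fin n) ℂ) ≠ 0 := by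
  intro h
  exact hij (MvPolynomial.X_injective (sub_eq_zero.1 h))

lemma coeff_X_sub_X_left {n : ℕ} {i j : Fin n} (hij : i ≠ j) :
    (MvPolynomial.X i - MvPolynomial.X j : MvPolynomial (Fin n) ℂ).coeff
      (Finsupp.single i 1) = 1 := by
  rw [MvPolynomial.coeff_sub, MvPolynomial.coeff_X, MvPolynomial.coeff_X, if_pos rfl, if_neg,
    sub_zero]
  intro h
  exact hij ((Finsupp.single_left_inj one_ne_zero).1 h).symm

lemma irreducible_X_sub_X {n : ℕ} {i j : Fin n} (hij : i ≠ j) :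
    Irreducible (MvPolynomial.X i - MvPolynomial.X j : MvPolynomial (Fin n) ℂ) := by
  apply MvPolynomial.irreducible_of_totalDegree_eq_one
  · apply le_antisymm
    · refine (MvPolynomial.totalDegree_sub _ _).trans ?_
      simp
    · have := MvPolynomial.le_totalDegree (p := (MvPolynomial.X i - MvPolynomial.X j :
        MvPolynomial (Fin n) ℂ)) (s := Finsupp.single i 1)
        (by rw [MvPolynomial.mem_support_iff, coeff_X_sub_X_left hij]; exact one_ne_zero)
      simpa using this
  · intro x hx
    have := hx (Finsupp.single i 1)
    rw [coeff_X_sub_X_left hij] at this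
    exact isUnit_of_dvd_one this

lemma isRelPrime_X_sub_X {n : ℕ} {i j k l : Fin n} (hij : i < j) (hkl : k < l)
    (h : ¬ (i = k ∧ j = l)) :
    IsRelPrime (MvPolynomial.X i - MvPolynomial.X j : MvPolynomial (Fin n) ℂ)
      (MvPolynomial.X k - MvPolynomial.X l) := by
  rw [(irreducible_X_sub_X hij.ne).isRelPrime_iff_not_dvd]
  rintro ⟨q, hq⟩
  by_cases hk : k = i ∨ k = j
  · have hl : l ≠ i ∧ l ≠ j := by omega
    have := congrArg (MvPolynomial.eval (Pi.single l (1 : ℂ))) hq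
    simp [hl.1.symm, hl.2.symm, hkl.ne] at this
  · rw [not_or] at hk
    have := congrArg (MvPolynomial.eval (Pi.single k (1 : ℂ))) hq
    simp [Ne.symm hk.1, Ne.symm hk.2, hkl.ne'] at this

lemma diffProd_dvd {n : ℕ} (m : Fin n → Fin n → ℕ) (g : MvPolynomial (Fin n) ℂ)
    (h : ∀ i j, i < j → (MvPolynomial.X i - MvPolynomial.X j) ^ m i j ∣ g) : diffProd m ∣ g := by
  unfold diffProd
  rw [Finset.prod_sigma']
  apply Finset.prod_dvd_of_isRelPrime
  · rintro ⟨j, i⟩ hij ⟨l, k⟩ hkl hne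
    simp at hij hkl
    apply IsRelPrime.pow
    apply isRelPrime_X_sub_X hij hkl
    rintro ⟨rfl, rfl⟩
    exact hne rfl
  · rintro ⟨j, i⟩ hij
    simp at hij
    exact h i j hij

lemma degreeOf_X_sub_X {n : ℕ} {i j : Fin n} (hij : i ≠ j) (k : Fin n) :
    MvPolynomial.degreeOf k (MvPolynomial.X i - MvPolynomial.X j : MvPolynomial (Fin n) ℂ) =
      if k = i ∨ k = j then 1 else 0 := by
  classical
  by_cases hki : k = i
  · subst hki
    rw [sub_eq_add_neg, MvPolynomial.degreeOf_add_eq_of_degreeOf_lt]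
    · simp
    · simp [MvPolynomial.degreeOf_neg, MvPolynomial.degreeOf_X_of_ne hij]
  · by_cases hkj : k = j
    · subst hkj
      rw [← MvPolynomial.degreeOf_neg, neg_sub, sub_eq_add_neg,
        MvPolynomial.degreeOf_add_eq_of_degreeOf_lt]
      · simp
      · simp [MvPolynomial.degreeOf_neg, MvPolynomial.degreeOf_X_of_ne hki]
    · rw [if_neg (by tauto), ← Nat.le_zero]
      refine (MvPolynomial.degreeOf_sub_le _ _ _).trans ?_
      simp [MvPolynomial.degreeOf_X_of_ne hki, MvPolynomial.degreeOf_X_of_ne hkj]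

lemma degreeOf_diffProd {n : ℕ} (m : Fin n → Fin n → ℕ) (k : Fin n) :
    MvPolynomial.degreeOf k (diffProd m) = ∑ i ∈ Iio k, m i k + ∑ j ∈ Ioi k, m k j := by
  classical
  unfold diffProd
  have hne : ∀ j, ∀ i ∈ Iio j,
      (MvPolynomial.X i - MvPolynomial.X j : MvPolynomial (Fin n) ℂ) ^ m i j ≠ 0 :=
    fun j i hi => pow_ne_zero _ (X_sub_X_ne_zero (mem_Iio.1 hi).ne)
  rw [MvPolynomial.degreeOf_prod_eq _ _ fun j _ => Finset.prod_ne_zero_iff.2 (hne j)]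
  have h1 : ∀ j, MvPolynomial.degreeOf k (∏ i ∈ Iio j,
      (MvPolynomial.X i - MvPolynomial.X j : MvPolynomial (Fin n) ℂ) ^ m i j) =
      if j = k then ∑ i ∈ Iio k, m i k else if k < j then m k j else 0 := by
    intro j
    rw [MvPolynomial.degreeOf_prod_eq _ _ (hne j)]
    have h2 : ∀ i ∈ Iio j, MvPolynomial.degreeOf k
      ((MvPolynomial.X i - MvPolynomial.X j : MvPolynomial (Fin n) ℂ) ^ m i j) =
        m i j * if k = i ∨ k = j then 1 else 0 := by
      intro i hi
      rw [MvPolynomial.degreeOf_pow_eq _ _ _ (X_sub_X_ne_zero (mem_Iio.1 hi).ne),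
        degreeOf_X_sub_X (mem_Iio.1 hi).ne]
    rw [Finset.sum_congr rfl h2]
    by_cases hjk : j = k
    · subst hjk; simp
    · rw [if_neg hjk]
      simp [Ne.symm hjk]
  rw [Finset.sum_congr rfl fun j _ => h1 j]
  rw [← Finset.add_sum_erase _ _ (mem_univ k), if_pos rfl]
  congr 1
  rw [← Finset.sum_filter_of_ne (p := fun j => k < j)]
  · refine Finset.sum_congr ?_ ?_
    · ext j; simp; intro h; exact h.ne'
    · intro j hj
      have := mem_Ioi.1 hj
      rw [if_neg this.ne', if_pos this]
  · intro j hj h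
    simp only [mem_erase] at hj
    by_contra h3
    simp [hj.1, h3] at h

/-- The lowest exponents of an element of `A ^ r`: order, spacing and bounds. -/
lemma bounds_of_lowestAt {n r : ℕ} {f : PolyRing n} (hf : f ∈ Ar n r) {a b : Fin n →₀ ℕ}
    {g : MvPolynomial (Fin n) ℂ} {c : ℂ} (ha : LowestAt (inX n f) a g) (hb : LowestAt g b c)
    (hc : c ≠ 0) :
    Monotone a ∧ (∀ i j, i < j → a i = a j → b i + r ≤ b j) ∧
    ∀ j, ∑ i ∈ Iio j, (r - (a j - a i)) ≤ b j ∧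
      b j + ∑ k ∈ Ioi j, (r - (a k - a j)) ≤ g.degreeOf j := by
  have hg : g ≠ 0 := by
    rintro rfl
    exact hc (by rw [← hb.2, MvPolynomial.coeff_zero])
  have hmono := monotone_of_lowestAt hf hg ha
  refine ⟨hmono, ?_, ?_⟩
  · intro i j hij haij
    -- Dividing `g` by `(y_i - y_j)^r` leaves a polynomial symmetric in `y_i` and `y_j`, whose
    -- lowest exponent is therefore nondecreasing from `i` to `j`.
    obtain ⟨q, hq⟩ := pow_dvd_of_lowestAt hf ha hij (hmono hij.le)
    rw [haij, Nat.sub_self, Nat.sub_zero] at hq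
    have hq0 : q ≠ 0 := by rintro rfl; exact hg (by rw [hq, mul_zero])
    have hswap := rename_coeff_of_mem_Ar hf (Equiv.swap i j) a
    have hsa : a.mapDomain (Equiv.swap i j) = a := by
      ext k
      rw [mapDomain_swap_apply]
      by_cases hki : k = i
      · subst hki; rw [Equiv.swap_apply_left, haij]
      · by_cases hkj : k = j
        · subst hkj; rw [Equiv.swap_apply_right, haij]
        · rw [Equiv.swap_apply_of_ne_of_ne hki hkj]
    have hqs : MvPolynomial.rename (Equiv.swap i j) q = q := by
      rw [hsa, ha.2, hq, map_mul, map_pow, map_sub, MvPolynomial.rename_X, MvPolynomial.rename_X,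
        Equiv.swap_apply_left, Equiv.swap_apply_right, Equiv.Perm.sign_swap hij.ne, ← neg_sub,
        neg_pow, MvPolynomial.smul_eq_C_mul] at hswap
      have h1 : ((-1) ^ r * (MvPolynomial.X i - MvPolynomial.X j) ^ r :
          MvPolynomial (Fin n) ℂ) ≠ 0 :=
        mul_ne_zero (pow_ne_zero _ (by simp)) (pow_ne_zero _ (X_sub_X_ne_zero hij.ne))
      apply mul_left_cancel₀ h1
      rw [hswap]
      simp [mul_assoc]
    obtain ⟨γ, e, he, hγ⟩ := LowestAt.exists_of_ne_zero hq0
    have hb' := ((lowestAt_X_sub_X hij).pow r).mul hγ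
    rw [← hq] at hb'
    have hbeq := hb.unique hb' hc (mul_ne_zero (pow_ne_zero _ (by norm_num)) he)
    have hle : γ i ≤ γ j := by
      by_contra hlt
      rw [not_le] at hlt
      have h2 := MvPolynomial.coeff_rename_mapDomain _ (Equiv.swap i j).injective q γ
      rw [hqs, hγ.2, hγ.1] at h2
      · exact he h2.symm
      · refine (toLex_lt_iff _ _).2 ⟨i, fun k hk => ?_, ?_⟩
        · rw [mapDomain_swap_apply, Equiv.swap_apply_of_ne_of_ne hk.ne (hk.trans hij).ne]
        · rw [mapDomain_swap_apply, Equiv.swap_apply_left]; exact hlt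
    have hbi := DFunLike.congr_fun hbeq i
    have hbj := DFunLike.congr_fun hbeq j
    simp [hij.ne] at hbi hbj
    omega
  · intro j
    obtain ⟨q, hq⟩ := diffProd_dvd (fun i j => r - (a j - a i)) g
      fun i j hij => pow_dvd_of_lowestAt hf ha hij (hmono hij.le)
    have hq0 : q ≠ 0 := by rintro rfl; exact hg (by rw [hq, mul_zero])
    have hV0 : diffProd (fun i j => r - (a j - a i)) ≠ 0 := by
      intro h; exact hg (by rw [hq, h, zero_mul])
    obtain ⟨γ, e, he, hγ⟩ := LowestAt.exists_of_ne_zero hq0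
    obtain ⟨u, hu, hV⟩ := lowestAt_diffProd (fun i j => r - (a j - a i))
    have hb' := hV.mul hγ
    rw [← hq] at hb'
    have hbj := DFunLike.congr_fun (hb.unique hb' hc (mul_ne_zero hu he)) j
    simp at hbj
    have hdeg := congrArg (MvPolynomial.degreeOf j) hq
    rw [MvPolynomial.degreeOf_mul_eq hV0 hq0, degreeOf_diffProd] at hdeg
    have hγj : γ j ≤ q.degreeOf j := MvPolynomial.degreeOf_le_iff.1 le_rfl γ
      (MvPolynomial.mem_support_iff.2 (by rw [hγ.2]; exact he))
    omega

/-! ### Block symmetric and window symmetric polynomials -/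

/-- The `ℂ`-span of the elementary symmetric polynomials in the variables `y_j`, `j ∈ K`, realized
as the span of the coefficients of `∏ (X + y_j)`. -/
def esymmSpan {n : ℕ} (K : Finset (Fin n)) : Submodule ℂ (MvPolynomial (Fin n) ℂ) :=
  coeffSpan ℂ (∏ j ∈ K, (Polynomial.X + Polynomial.C (MvPolynomial.X j)))

lemma esymmSpan_empty {n : ℕ} : esymmSpan (∅ : Finset (Fin n)) = 1 := by
  apply le_antisymm
  · rw [esymmSpan, coeffSpan_le_iff]
    intro i
    rw [Finset.prod_empty, Polynomial.coeff_one]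
    split_ifs
    · exact Submodule.one_le.1 le_rfl
    · exact Submodule.zero_mem _
  · rw [Submodule.one_le]
    have := coeff_mem_coeffSpan (k := ℂ)
      (∏ j ∈ (∅ : Finset (Fin n)), (Polynomial.X + Polynomial.C (MvPolynomial.X j :
        MvPolynomial (Fin n) ℂ))) 0
    simpa [esymmSpan] using this

/-- The Dedekind–Mertens lemma for elementary symmetric polynomials of disjoint sets. -/
lemma esymmSpan_disjUnion {n : ℕ} {K L : Finset (Fin n)} (h : Disjoint K L) {t : ℕ}
    (ht : #L ≤ t) :
    esymmSpan K ^ t * (esymmSpan K * esymmSpan L) ≤ esymmSpan K ^ t * esymmSpan (K ∪ L) := by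
  unfold esymmSpan
  rw [Finset.prod_union h]
  refine coeffSpan_dedekindMertens ht _ _ ?_
  refine (Polynomial.natDegree_prod_le _ _).trans ?_
  simp

/-- The indices `j` with `p ≤ a j < q`. -/
def window {n : ℕ} (a : Fin n → ℕ) (p q : ℕ) : Finset (Fin n) :=
  univ.filter fun j => p ≤ a j ∧ a j < q

/-- The span of the elementary symmetric polynomials of the level set `{j | a j = v}`. -/
def blockSpan {n : ℕ} (a : Fin n → ℕ) (v : ℕ) : Submodule ℂ (MvPolynomial (Fin n) ℂ) :=
  esymmSpan (window a v (v + 1))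

/-- Merging the level sets of an interval into one window, in the presence of enough further
factors of each level set; the level sets are merged from the top downwards. -/
lemma interval_le {n : ℕ} (a : Fin n → ℕ) (k : ℕ) : ∀ p : ℕ,
    (∏ v ∈ Ico p (p + k), blockSpan a v ^ #{j | v < a j}) *
        ∏ v ∈ Ico p (p + k + 1), blockSpan a v ≤
      (∏ v ∈ Ico p (p + k), blockSpan a v ^ #{j | v < a j}) * esymmSpan (window a p (p + k + 1)) := by
  induction k with
  | zero => intro p; simp [blockSpan]
  | succ k ih =>
    intro p
    have ih' := ih (p + 1)
    rw [show p + 1 + k = p + (k + 1) by ring] at ih'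
    rw [Finset.prod_eq_prod_Ico_succ_bot (show p < p + (k + 1) by omega),
      Finset.prod_eq_prod_Ico_succ_bot (show p < p + (k + 1) + 1 by omega)]
    set Z := ∏ v ∈ Ico (p + 1) (p + (k + 1)), blockSpan a v ^ #{j | v < a j}
    set X := ∏ v ∈ Ico (p + 1) (p + (k + 1) + 1), blockSpan a v
    set M := blockSpan a p ^ #{j | p < a j} with hM
    have hw : window a p (p + (k + 1) + 1) =
        window a p (p + 1) ∪ window a (p + 1) (p + (k + 1) + 1) := by
      ext j; simp [window]; omega
    have hd : Disjoint (window a p (p + 1)) (window a (p + 1) (p + (k + 1) + 1)) := by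
      rw [Finset.disjoint_left]; intro j; simp [window]; omega
    have hc : #(window a (p + 1) (p + (k + 1) + 1)) ≤ #{j | p < a j} := by
      apply Finset.card_le_card; intro j; simp [window]; omega
    have h1 := esymmSpan_disjUnion hd hc
    rw [← hw] at h1
    calc M * Z * (blockSpan a p * X) = M * blockSpan a p * (Z * X) := by ring
      _ ≤ M * blockSpan a p * (Z * esymmSpan (window a (p + 1) (p + (k + 1) + 1))) :=
          mul_le_mul_right ih' _
      _ = Z * (M * (blockSpan a p * esymmSpan (window a (p + 1) (p + (k + 1) + 1)))) := by ring
      _ ≤ Z * (M * esymmSpan (window a p (p + (k + 1) + 1))) := mul_le_mul_right h1 _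
      _ = _ := by ring

lemma mul_pow_le_of_mul_le {R : Type*} [CommRing R] [Algebra ℂ R] {Z X V : Submodule ℂ R}
    (h : Z * X ≤ Z * V) (u : ℕ) : Z * X ^ u ≤ Z * V ^ u := by
  induction u with
  | zero => simp
  | succ u ih =>
    calc Z * X ^ (u + 1) = (Z * X ^ u) * X := by ring
      _ ≤ (Z * V ^ u) * X := mul_le_mul_left ih _
      _ = V ^ u * (Z * X) := by ring
      _ ≤ V ^ u * (Z * V) := mul_le_mul_right h _
      _ = _ := by ring

/-- The product of the level sets of each window may be replaced by the window itself: when the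
window ending at `t` is merged, the earlier windows still supply the factors needed. -/
lemma prod_windows_le {n : ℕ} (a : Fin n → ℕ) {r : ℕ} (hr : 1 ≤ r) (u : ℕ → ℕ)
    (hu : ∀ τ, #{j | τ < a j} ≤ u τ) (t : ℕ) :
    ∏ τ ∈ range t, (∏ v ∈ Ico (τ + 1 - r) (τ + 1), blockSpan a v) ^ u τ ≤
      ∏ τ ∈ range t, esymmSpan (window a (τ + 1 - r) (τ + 1)) ^ u τ := by
  induction t with
  | zero => simp
  | succ t ih =>
    rw [Finset.prod_range_succ, Finset.prod_range_succ]
    set R := ∏ τ ∈ range t, (∏ v ∈ Ico (τ + 1 - r) (τ + 1), blockSpan a v) ^ u τ with hR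
    have hZ := interval_le a (t - (t + 1 - r)) (t + 1 - r)
    rw [show t + 1 - r + (t - (t + 1 - r)) = t by omega] at hZ
    set Z := ∏ v ∈ Ico (t + 1 - r) t, blockSpan a v ^ #{j | v < a j} with hZdef
    have hdvd : Z ∣ R := by
      calc Z ∣ ∏ v ∈ Ico (t + 1 - r) t, blockSpan a v ^ u v :=
            Finset.prod_dvd_prod_of_dvd _ _ fun v _ => pow_dvd_pow _ (hu v)
        _ ∣ ∏ v ∈ range t, blockSpan a v ^ u v :=
            Finset.prod_dvd_prod_of_subset _ _ _ (by intro v; simp)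
        _ ∣ R := by
            refine Finset.prod_dvd_prod_of_dvd _ _ fun v _ => pow_dvd_pow_of_dvd ?_ _
            exact Finset.dvd_prod_of_mem _ (by rw [mem_Ico]; omega)
    obtain ⟨R', hR'⟩ := hdvd
    have h2 := mul_pow_le_of_mul_le hZ (u t)
    calc R * (∏ v ∈ Ico (t + 1 - r) (t + 1), blockSpan a v) ^ u t
        = R' * (Z * (∏ v ∈ Ico (t + 1 - r) (t + 1), blockSpan a v) ^ u t) := by rw [hR']; ring
      _ ≤ R' * (Z * esymmSpan (window a (t + 1 - r) (t + 1)) ^ u t) := mul_le_mul_right h2 _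
      _ = R * esymmSpan (window a (t + 1 - r) (t + 1)) ^ u t := by rw [hR']; ring
      _ ≤ _ := mul_le_mul_left ih _

/-- Products of block-symmetric polynomials are generated by products of window-symmetric ones,
provided that every window occurs often enough. -/
lemma prod_blocks_le_prod_windows {n : ℕ} (a : Fin n → ℕ) {r : ℕ} (hr : 1 ≤ r) (u : ℕ → ℕ)
    (hu : ∀ τ, #{j | τ < a j} ≤ u τ) (A : ℕ) (hA : ∀ j, a j < A) :
    ∏ v ∈ range A, blockSpan a v ^ (∑ τ ∈ Ico v (v + r), u τ) ≤
      ∏ τ ∈ range (A + r), esymmSpan (window a (τ + 1 - r) (τ + 1)) ^ u τ := by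
  refine le_trans (le_of_eq ?_) (prod_windows_le a hr u hu (A + r))
  simp_rw [← Finset.prod_pow]
  rw [Finset.prod_comm' (t' := range (A + r)) (s' := fun v => Ico v (min (v + r) (A + r)))]
  · rw [Finset.range_eq_Ico, Finset.range_eq_Ico,
      ← Finset.prod_Ico_consecutive _ (Nat.zero_le A) (Nat.le_add_right A r)]
    rw [Finset.prod_eq_one (s := Ico A (A + r)), mul_one]
    · refine Finset.prod_congr rfl fun v hv => ?_
      rw [mem_Ico] at hv
      rw [Finset.prod_pow_eq_pow_sum, min_eq_left (by omega)]
    · intro v hv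
      rw [mem_Ico] at hv
      have : blockSpan a v = 1 := by
        unfold blockSpan
        rw [show window a v (v + 1) = ∅ from ?_, esymmSpan_empty]
        ext j; have := hA j; simp [window]; omega
      simp [this]
  · intro τ v
    simp only [mem_range, mem_Ico]
    omega

/-! ### Lowest monomials of products of block symmetric polynomials -/

namespace LowestAt

lemma sum {n : ℕ} {R ι : Type*} [CommRing R] (s : Finset ι) (F : ι → MvPolynomial (Fin n) R)
    (α : Fin n →₀ ℕ) (c : ι → R) (h : ∀ i ∈ s, LowestAt (F i) α (c i)) :
    LowestAt (∑ i ∈ s, F i) α (∑ i ∈ s, c i) := by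
  constructor
  · intro β hβ
    rw [MvPolynomial.coeff_sum]
    exact Finset.sum_eq_zero fun i hi => (h i hi).1 β hβ
  · rw [MvPolynomial.coeff_sum]
    exact Finset.sum_congr rfl fun i hi => (h i hi).2

lemma monomial {n : ℕ} {R : Type*} [CommRing R] (α : Fin n →₀ ℕ) (c : R) :
    LowestAt (MvPolynomial.monomial α c) α c := by
  classical
  constructor
  · intro β hβ
    rw [MvPolynomial.coeff_monomial, if_neg]
    rintro rfl
    exact lt_irrefl _ hβ
  · rw [MvPolynomial.coeff_monomial, if_pos rfl]

lemma of_lt {n : ℕ} {R : Type*} [CommRing R] {F : MvPolynomial (Fin n) R} {α β : Fin n →₀ ℕ}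
    {c : R} (h : LowestAt F β c) (hlt : toLex α < toLex β) : LowestAt F α 0 :=
  ⟨fun γ hγ => h.1 γ (hγ.trans hlt), h.1 α hlt⟩

end LowestAt

/-- The indicator exponent of a set of indices. -/
def indExp {n : ℕ} (S : Finset (Fin n)) : Fin n →₀ ℕ := ∑ j ∈ S, Finsupp.single j 1

lemma indExp_apply {n : ℕ} (S : Finset (Fin n)) (j : Fin n) :
    indExp S j = if j ∈ S then 1 else 0 := by
  classical
  simp [indExp, Finsupp.single_apply]

lemma indExp_lt {n : ℕ} {B S T : Finset (Fin n)}
    (hupper : ∀ i ∈ S, ∀ j ∈ B, i < j → j ∈ S) (hT : T ⊆ B) (hcard : #T = #S) (hne : T ≠ S) :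
    toLex (indExp S) < toLex (indExp T) := by
  classical
  have hnonempty : (symmDiff S T).Nonempty := by
    rw [Finset.nonempty_iff_ne_empty]
    intro h
    exact hne (symmDiff_eq_bot.1 h).symm
  let i := (symmDiff S T).min' hnonempty
  have hi : i ∈ symmDiff S T := Finset.min'_mem _ _
  have hmin : ∀ j ∈ symmDiff S T, i ≤ j := fun j hj => Finset.min'_le _ _ hj
  have hiT : i ∈ T ∧ i ∉ S := by
    rw [Finset.mem_symmDiff] at hi
    rcases hi with hi | hi
    · exfalso
      obtain ⟨j, hj⟩ : (T \ S).Nonempty := by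
        rw [Finset.nonempty_iff_ne_empty]
        intro h
        rw [Finset.sdiff_eq_empty_iff_subset] at h
        exact hne (Finset.eq_of_subset_of_card_le h hcard.ge)
      rw [mem_sdiff] at hj
      have h1 := hmin j (by rw [Finset.mem_symmDiff]; exact Or.inr hj)
      have h2 : i ≠ j := by rintro h; rw [← h] at hj; exact hj.2 hi.1
      exact hj.2 (hupper i hi.1 j (hT hj.1) (lt_of_le_of_ne h1 h2))
    · exact hi
  refine (toLex_lt_iff _ _).2 ⟨i, fun j hj => ?_, ?_⟩
  · rw [indExp_apply, indExp_apply]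
    have : j ∉ symmDiff S T := fun h => absurd hj (not_lt.2 (hmin j h))
    rw [Finset.mem_symmDiff] at this
    congr 1
    simp only [eq_iff_iff]
    tauto
  · rw [indExp_apply, indExp_apply, if_neg hiT.2, if_pos hiT.1]
    exact one_pos

/-- For an upper subset `S` of `K`, the lowest monomial of the elementary symmetric polynomial of
degree `#S` in the variables indexed by `K` is the product of the variables indexed by `S`. -/
lemma exists_mem_esymmSpan {n : ℕ} {K S : Finset (Fin n)} (hS : S ⊆ K)
    (hupper : ∀ i ∈ S, ∀ j ∈ K, i < j → j ∈ S) :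
    ∃ e ∈ esymmSpan K, LowestAt e (indExp S) 1 := by
  classical
  refine ⟨_, coeff_mem_coeffSpan _ (#K - #S), ?_⟩
  have hc := Finset.card_le_card hS
  rw [Finset.prod_X_add_C_coeff _ _ (Nat.sub_le _ _), show #K - (#K - #S) = #S by omega]
  have h1 : ∀ T : Finset (Fin n), ∏ j ∈ T, (MvPolynomial.X j : MvPolynomial (Fin n) ℂ) =
      MvPolynomial.monomial (indExp T) 1 := by
    intro T
    rw [indExp, MvPolynomial.monomial_sum_one]
    rfl
  simp_rw [h1]
  have := LowestAt.sum (K.powersetCard #S)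
    (fun T => MvPolynomial.monomial (indExp T) (1 : ℂ)) (indExp S)
    (fun T => if T = S then 1 else 0) (fun T hT => by
      rw [mem_powersetCard] at hT
      by_cases h : T = S
      · subst h
        rw [if_pos rfl]
        exact LowestAt.monomial _ _
      · rw [if_neg h]
        exact (LowestAt.monomial _ _).of_lt (indExp_lt hupper hT.1 hT.2 h))
  rwa [Finset.sum_ite_eq', if_pos (by rw [mem_powersetCard]; exact ⟨hS, rfl⟩)] at this

lemma prod_mem_prod_submodule {R ι : Type*} [CommRing R] [Algebra ℂ R] (s : Finset ι)
    (M : ι → Submodule ℂ R) (x : ι → R) (h : ∀ i ∈ s, x i ∈ M i) :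
    ∏ i ∈ s, x i ∈ ∏ i ∈ s, M i := by
  classical
  induction s using Finset.induction_on with
  | empty =>
    rw [Finset.prod_empty, Finset.prod_empty]
    exact Submodule.one_le.1 le_rfl
  | insert i s hi ih =>
    rw [Finset.prod_insert hi, Finset.prod_insert hi]
    exact Submodule.mul_mem_mul (h i (mem_insert_self _ _))
      (ih fun j hj => h j (mem_insert_of_mem hj))

/-- Every exponent `c` that is nondecreasing on the blocks of `a`, and bounded by `U` there, is the
lowest exponent of an element of the product of the block spans. -/
lemma exists_mem_prod_blocks {n : ℕ} (a c : Fin n → ℕ) (U : ℕ → ℕ) (A : ℕ) (hA : ∀ j, a j < A)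
    (hc : ∀ i j, i < j → a i = a j → c i ≤ c j) (hU : ∀ j, c j ≤ U (a j)) :
    ∃ q ∈ ∏ v ∈ range A, blockSpan a v ^ U v,
      LowestAt q (Finsupp.equivFunOnFinite.symm c) 1 := by
  classical
  have h : ∀ v k, ∃ e ∈ blockSpan a v,
      LowestAt e (indExp (univ.filter fun j => a j = v ∧ k < c j)) 1 := by
    intro v k
    apply exists_mem_esymmSpan
    · intro j; simp [window]; omega
    · intro i hi j hj hij
      simp [window] at hi hj ⊢
      have : a j = v := by omega
      have := hc i j hij (by omega)
      omega
  choose e he he' using h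
  refine ⟨∏ v ∈ range A, ∏ k ∈ range (U v), e v k, ?_, ?_⟩
  · refine prod_mem_prod_submodule _ _ _ fun v _ => ?_
    have := prod_mem_prod_submodule (range (U v)) (fun _ => blockSpan a v) (e v)
      fun k _ => he v k
    simpa using this
  · have := LowestAt.prod (range A) _ _ _ fun v _ =>
      LowestAt.prod (range (U v)) _ _ _ fun k _ => he' v k
    simp only [Finset.prod_const_one] at this
    convert this using 1
    ext j
    simp only [Finsupp.finsetSum_apply, indExp_apply, mem_filter, mem_univ, true_and,
      Finsupp.equivFunOnFinite_symm_apply_apply]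
    symm
    rw [Finset.sum_eq_single (a j)]
    · simp only [true_and]
      rw [← Finset.card_filter]
      rw [show ((range (U (a j))).filter fun k => k < c j) = range (c j) from ?_, card_range]
      ext k; have := hU j; simp; omega
    · intro v _ hv
      exact Finset.sum_eq_zero fun k _ => by rw [if_neg]; intro h; exact hv h.1.symm
    · intro h; exact absurd (mem_range.2 (hA j)) h

/-! ### Antisymmetrisation -/

lemma mapDomain_perm_apply {n : ℕ} (σ : Equiv.Perm (Fin n)) (α : Fin n →₀ ℕ) (k : Fin n) :
    α.mapDomain σ k = α (σ.symm k) := by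
  rw [← Finsupp.equivMapDomain_eq_mapDomain, Finsupp.equivMapDomain_apply]

/-- A nondecreasing exponent is lexicographically minimal among its rearrangements. -/
lemma lt_mapDomain_of_monotone {n : ℕ} {α : Fin n →₀ ℕ} (hα : Monotone α)
    (σ : Equiv.Perm (Fin n)) (hne : α.mapDomain σ ≠ α) :
    toLex α < toLex (α.mapDomain σ) := by
  classical
  by_contra hlt
  rw [not_lt] at hlt
  have hlt' : toLex (α.mapDomain σ) < toLex α :=
    lt_of_le_of_ne hlt fun h => hne (toLex.injective h)
  obtain ⟨i, hi, hii⟩ := (toLex_lt_iff _ _).1 hlt'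
  set β := α.mapDomain σ with hβ
  have hcard : #{k | α k ≤ β i} = #{k | β k ≤ β i} := by
    refine Finset.card_bij (fun k _ => σ k) ?_ ?_ ?_
    · intro k hk
      simp only [mem_filter, mem_univ, true_and] at hk ⊢
      rw [hβ, mapDomain_perm_apply σ α (σ k), Equiv.symm_apply_apply]
      exact hk
    · intro k _ l _ h; exact σ.injective h
    · intro k hk
      simp only [mem_filter, mem_univ, true_and] at hk
      refine ⟨σ.symm k, ?_, by simp⟩
      simp only [mem_filter, mem_univ, true_and]
      rw [← mapDomain_perm_apply]; exact hk
  have hss : univ.filter (fun k => α k ≤ β i) ⊂ univ.filter (fun k => β k ≤ β i) := by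
    rw [Finset.ssubset_iff_of_subset]
    · exact ⟨i, by simp, by simpa using hii⟩
    · intro k hk
      simp only [mem_filter, mem_univ, true_and] at hk ⊢
      have hki : k < i := by
        by_contra h
        have := hα (not_lt.1 h)
        omega
      rw [hi k hki]; exact hk
  exact absurd hcard (Finset.card_lt_card hss).ne

/-- The antisymmetrization of the polynomial `x ^ α * p`, where `p` only involves the `y_i`. -/
def altSum {n : ℕ} (α : Fin n →₀ ℕ) (p : MvPolynomial (Fin n) ℂ) : PolyRing n :=
  ∑ σ : Equiv.Perm (Fin n), ((Equiv.Perm.sign σ : ℤ) : ℂ) •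
    MvPolynomial.rename (Equiv.sumCongr σ σ) ((inX n).symm (MvPolynomial.monomial α p))

lemma isAlternating_altSum {n : ℕ} (α : Fin n →₀ ℕ) (p : MvPolynomial (Fin n) ℂ) :
    IsAlternating n (altSum α p) := by
  intro τ
  unfold altSum
  rw [map_sum, Finset.smul_sum]
  refine Fintype.sum_equiv (Equiv.mulLeft τ) _ _ fun σ => ?_
  rw [map_smul, smul_smul, MvPolynomial.rename_rename, Equiv.coe_mulLeft, Equiv.Perm.sign_mul]
  congr 1
  · have : ((Equiv.Perm.sign τ : ℤ) : ℂ) * ((Equiv.Perm.sign τ : ℤ) : ℂ) = 1 := by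
      rw [← Int.cast_mul, ← Units.val_mul, Int.units_mul_self]; simp
    push_cast
    rw [← mul_assoc, this, one_mul]
  · congr 2
    ext v
    rcases v with v | v <;> rfl

lemma inX_rename_symm_monomial {n : ℕ} (σ : Equiv.Perm (Fin n)) (α : Fin n →₀ ℕ)
    (p : MvPolynomial (Fin n) ℂ) :
    inX n (MvPolynomial.rename (Equiv.sumCongr σ σ) ((inX n).symm (MvPolynomial.monomial α p))) =
      MvPolynomial.monomial (α.mapDomain σ) (MvPolynomial.rename σ p) := by
  rw [inX_rename, AlgEquiv.apply_symm_apply, MvPolynomial.map_monomial,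
    MvPolynomial.rename_monomial]
  rfl

lemma lowestAt_altSum {n : ℕ} {α : Fin n →₀ ℕ} (hα : Monotone α) {p : MvPolynomial (Fin n) ℂ}
    (hp : ∀ σ : Equiv.Perm (Fin n), α.mapDomain σ = α →
      MvPolynomial.rename σ p = ((Equiv.Perm.sign σ : ℤ) : ℂ) • p) :
    LowestAt (inX n (altSum α p)) α
      ((#{σ : Equiv.Perm (Fin n) | α.mapDomain σ = α} : ℂ) • p) := by
  classical
  unfold altSum
  rw [map_sum]
  have := LowestAt.sum (univ : Finset (Equiv.Perm (Fin n)))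
    (fun σ => inX n (((Equiv.Perm.sign σ : ℤ) : ℂ) •
      MvPolynomial.rename (Equiv.sumCongr σ σ) ((inX n).symm (MvPolynomial.monomial α p)))) α
    (fun σ => if α.mapDomain σ = α then p else 0) (fun σ _ => by
      rw [map_smul, inX_rename_symm_monomial, MvPolynomial.smul_monomial]
      split_ifs with h
      · rw [h, hp σ h, smul_smul]
        have h1 : ((Equiv.Perm.sign σ : ℤ) : ℂ) * ((Equiv.Perm.sign σ : ℤ) : ℂ) = 1 := by
          rw [← Int.cast_mul, ← Units.val_mul, Int.units_mul_self]; simp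
        rw [h1, one_smul]
        exact LowestAt.monomial _ _
      · exact (LowestAt.monomial _ _).of_lt (lt_mapDomain_of_monotone hα σ h))
  rw [← Finset.sum_filter, Finset.sum_const] at this
  rwa [Nat.cast_smul_eq_nsmul]

lemma rename_mem_suppInPoly {n : ℕ} {s d1 d2 : ℤ} {f : PolyRing n} (hf : f ∈ SuppInPoly n s d1 d2)
    (σ : Equiv.Perm (Fin n)) :
    MvPolynomial.rename (Equiv.sumCongr σ σ) f ∈ SuppInPoly n s d1 d2 := by
  classical
  intro d hd i
  rw [MvPolynomial.support_rename_of_injective (Equiv.injective _), mem_image] at hd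
  obtain ⟨e, he, rfl⟩ := hd
  have := hf e he (σ.symm i)
  rw [← Finsupp.equivMapDomain_eq_mapDomain]
  simpa [Finsupp.equivMapDomain_apply] using this

lemma altSum_mem_suppInPoly {n : ℕ} {s d1 d2 : ℤ} {α : Fin n →₀ ℕ} {p : MvPolynomial (Fin n) ℂ}
    (h1 : ∀ j, (α j : ℤ) ≤ d1) (h2 : ∀ j, (p.degreeOf j : ℤ) ≤ d2 + s * α j) :
    altSum α p ∈ SuppInPoly n s d1 d2 := by
  classical
  unfold altSum
  refine Submodule.sum_mem _ fun σ _ => Submodule.smul_mem _ _ (rename_mem_suppInPoly ?_ σ)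
  intro d hd i
  obtain ⟨α', β, rfl⟩ := joinExp_surj d
  rw [MvPolynomial.mem_support_iff, coeff_joinExp, AlgEquiv.apply_symm_apply,
    MvPolynomial.coeff_monomial] at hd
  split_ifs at hd with h
  · subst h
    have hβ : β i ≤ p.degreeOf i :=
      MvPolynomial.degreeOf_le_iff.1 le_rfl β (MvPolynomial.mem_support_iff.2 hd)
    have := h2 i
    simp only [joinExp, Finsupp.equivFunOnFinite_symm_apply_apply, Sum.elim_inl, Sum.elim_inr]
    exact ⟨h1 i, by omega⟩
  · simp at hd

lemma one_mem_suppInPoly {n : ℕ} {s : ℤ} : (1 : PolyRing n) ∈ SuppInPoly n s 0 0 := by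
  classical
  intro d hd i
  rw [MvPolynomial.mem_support_iff, MvPolynomial.coeff_one] at hd
  split_ifs at hd with h
  · subst h; simp
  · simp at hd

lemma mul_mem_suppInPoly {n : ℕ} {s d1 d2 e1 e2 : ℤ} {f g : PolyRing n}
    (hf : f ∈ SuppInPoly n s d1 d2) (hg : g ∈ SuppInPoly n s e1 e2) :
    f * g ∈ SuppInPoly n s (d1 + e1) (d2 + e2) := by
  classical
  intro d hd i
  obtain ⟨x, hx, y, hy, rfl⟩ := Finset.mem_add.1 (MvPolynomial.support_mul f g hd)
  have h1 := hf x hx i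
  have h2 := hg y hy i
  simp only [Finsupp.add_apply, Nat.cast_add]
  constructor
  · linarith [h1.1, h2.1]
  · linarith [h1.2, h2.2]

lemma prod_mem_suppInPoly {n : ℕ} {s : ℤ} {ι : Type*} (t : Finset ι) (d1 d2 : ι → ℤ)
    (f : ι → PolyRing n) (hf : ∀ m ∈ t, f m ∈ SuppInPoly n s (d1 m) (d2 m)) :
    ∏ m ∈ t, f m ∈ SuppInPoly n s (∑ m ∈ t, d1 m) (∑ m ∈ t, d2 m) := by
  classical
  induction t using Finset.induction_on with
  | empty => simpa using one_mem_suppInPoly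
  | insert i t hi ih =>
    rw [Finset.prod_insert hi, Finset.sum_insert hi, Finset.sum_insert hi]
    exact mul_mem_suppInPoly (hf i (mem_insert_self _ _))
      (ih fun j hj => hf j (mem_insert_of_mem hj))

/-- The polynomials in the `y_i` that are symmetric under the permutations preserving `α` and have
degree at most `w j` in `y_j`. -/
def blockSymm {n : ℕ} (α : Fin n → ℕ) (w : Fin n → ℕ) : Submodule ℂ (MvPolynomial (Fin n) ℂ) where
  carrier := {q | (∀ σ : Equiv.Perm (Fin n), (∀ j, α (σ j) = α j) → MvPolynomial.rename σ q = q) ∧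
    ∀ j, q.degreeOf j ≤ w j}
  add_mem' := by
    rintro p q ⟨hp, hp'⟩ ⟨hq, hq'⟩
    refine ⟨fun σ hσ => by rw [map_add, hp σ hσ, hq σ hσ], fun j => ?_⟩
    exact (MvPolynomial.degreeOf_add_le _ _ _).trans (max_le (hp' j) (hq' j))
  zero_mem' := ⟨fun σ _ => map_zero _, fun j => by simp⟩
  smul_mem' := by
    rintro c p ⟨hp, hp'⟩
    refine ⟨fun σ hσ => by rw [map_smul, hp σ hσ], fun j => ?_⟩
    rw [MvPolynomial.smul_eq_C_mul]
    exact (MvPolynomial.degreeOf_C_mul_le _ _ _).trans (hp' j)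

lemma blockSymm_mul_le {n : ℕ} (α w w' : Fin n → ℕ) :
    blockSymm α w * blockSymm α w' ≤ blockSymm α (w + w') := by
  rw [Submodule.mul_le]
  rintro p ⟨hp, hp'⟩ q ⟨hq, hq'⟩
  refine ⟨fun σ hσ => by rw [map_mul, hp σ hσ, hq σ hσ], fun j => ?_⟩
  exact (MvPolynomial.degreeOf_mul_le _ _ _).trans (add_le_add (hp' j) (hq' j))

lemma one_le_blockSymm {n : ℕ} (α : Fin n → ℕ) : 1 ≤ blockSymm α 0 := by
  rw [Submodule.one_le]
  exact ⟨fun σ _ => map_one _, fun j => by simp⟩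

lemma blockSymm_mono {n : ℕ} (α : Fin n → ℕ) {w w' : Fin n → ℕ} (h : w ≤ w') :
    blockSymm α w ≤ blockSymm α w' := fun _ hp => ⟨hp.1, fun j => (hp.2 j).trans (h j)⟩

lemma prod_le_blockSymm {n : ℕ} {ι : Type*} (t : Finset ι) (α : Fin n → ℕ) (w : ι → Fin n → ℕ)
    (M : ι → Submodule ℂ (MvPolynomial (Fin n) ℂ)) (h : ∀ i ∈ t, M i ≤ blockSymm α (w i)) :
    ∏ i ∈ t, M i ≤ blockSymm α (∑ i ∈ t, w i) := by
  classical
  induction t using Finset.induction_on with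
  | empty => simpa using one_le_blockSymm α
  | insert i t hi ih =>
    rw [Finset.prod_insert hi, Finset.sum_insert hi]
    exact (mul_le_mul' (h i (mem_insert_self _ _))
      (ih fun j hj => h j (mem_insert_of_mem hj))).trans (blockSymm_mul_le _ _ _)

lemma esymmSpan_le_blockSymm {n : ℕ} (α : Fin n → ℕ) (K : Finset (Fin n))
    (hK : ∀ i ∈ K, ∀ j, α j = α i → j ∈ K) :
    esymmSpan K ≤ blockSymm α (fun j => if j ∈ K then 1 else 0) := by
  classical
  rw [esymmSpan, coeffSpan_le_iff]
  intro k
  constructor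
  · intro σ hσ
    have h1 : (MvPolynomial.rename σ : MvPolynomial (Fin n) ℂ →ₐ[ℂ] MvPolynomial (Fin n) ℂ)
        ((∏ j ∈ K, (Polynomial.X + Polynomial.C (MvPolynomial.X j))).coeff k) =
        ((∏ j ∈ K, (Polynomial.X + Polynomial.C (MvPolynomial.X j))).map
          (MvPolynomial.rename σ : MvPolynomial (Fin n) ℂ →ₐ[ℂ] _).toRingHom).coeff k := by
      rw [Polynomial.coeff_map]; rfl
    rw [h1]
    congr 1
    rw [Polynomial.map_prod]
    have h2 : ∀ j, Polynomial.map (MvPolynomial.rename σ : MvPolynomial (Fin n) ℂ →ₐ[ℂ] _).toRingHom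
        (Polynomial.X + Polynomial.C (MvPolynomial.X j)) =
        Polynomial.X + Polynomial.C (MvPolynomial.X (σ j)) := by
      intro j; simp
    rw [Finset.prod_congr rfl fun j _ => h2 j]
    refine Finset.prod_bij (fun j _ => σ j) ?_ ?_ ?_ ?_
    · intro j hj; exact hK j hj _ (hσ j)
    · intro i _ j _ h; exact σ.injective h
    · intro j hj
      refine ⟨σ.symm j, hK j hj _ ?_, by simp⟩
      rw [← hσ, Equiv.apply_symm_apply]
    · intro j _; rfl
  · intro j
    rcases le_or_gt k #K with hk | hk
    · rw [Finset.prod_X_add_C_coeff _ _ hk]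
      refine (MvPolynomial.degreeOf_sum_le _ _ _).trans (Finset.sup_le fun T hT => ?_)
      refine (MvPolynomial.degreeOf_prod_le _ _ _).trans ?_
      rw [Finset.sum_congr rfl fun i _ => MvPolynomial.degreeOf_X j i]
      rw [Finset.sum_ite_eq]
      have := (mem_powersetCard.1 hT).1
      by_cases hjT : j ∈ T
      · simp [hjT, this hjT]
      · simp [hjT]
    · rw [Polynomial.coeff_eq_zero_of_natDegree_lt]
      · simp
      · refine lt_of_le_of_lt (Polynomial.natDegree_prod_le _ _) ?_
        simpa using hk

/-- For nondecreasing `α`, the product of the `y_i - y_j` over the pairs `i < j` with `α i = α j`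
is antisymmetric under the permutations preserving `α`. -/
lemma rename_diffProd {n : ℕ} {α : Fin n → ℕ} (hα : Monotone α) (σ : Equiv.Perm (Fin n))
    (hσ : ∀ j, α (σ j) = α j) :
    MvPolynomial.rename σ (diffProd fun i j => if α i = α j then 1 else 0) =
      ((Equiv.Perm.sign σ : ℤ) : ℂ) • diffProd fun i j => if α i = α j then 1 else 0 := by
  classical
  let φ : Fin n → Fin n → MvPolynomial (Fin n) ℂ := fun i j =>
    if α i = α j then MvPolynomial.X i - MvPolynomial.X j else if α i < α j then 1 else -1
  have hφ : diffProd (fun i j => if α i = α j then 1 else 0) = ∏ j, ∏ i ∈ Iio j, φ i j := by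
    refine Finset.prod_congr rfl fun j _ => Finset.prod_congr rfl fun i hi => ?_
    simp only [φ]
    split_ifs with h1 h2
    · rw [pow_one]
    · rw [pow_zero]
    · exact absurd (lt_of_le_of_ne (hα (mem_Iio.1 hi).le) h1) h2
  have hanti : ∀ i j, φ i j = - φ j i := by
    intro i j
    simp only [φ]
    rcases lt_trichotomy (α i) (α j) with h | h | h
    · rw [if_neg h.ne, if_pos h, if_neg h.ne', if_neg h.not_gt, neg_neg]
    · rw [if_pos h, if_pos h.symm, neg_sub]
    · rw [if_neg h.ne', if_neg h.not_gt, if_neg h.ne, if_pos h]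
  have hren : ∀ i j, MvPolynomial.rename σ (φ i j) = φ (σ i) (σ j) := by
    intro i j
    simp only [φ, hσ]
    split_ifs <;> simp
  rw [hφ, map_prod]
  simp_rw [map_prod, hren]
  rw [Equiv.Perm.prod_Iio_comp_eq_sign_mul_prod σ hanti, MvPolynomial.smul_eq_C_mul]
  congr 1

/-! ### Splitting exponents and degrees among `r` factors -/

lemma sum_Ico_of_quasiperiodic {r k : ℕ} (g : ℕ → ℕ) (hg : ∀ τ, g (τ + r) = g τ + k) (v : ℕ) :
    ∑ τ ∈ Ico v (v + r), g τ = ∑ τ ∈ range r, g τ + k * v := by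
  induction v with
  | zero => simp
  | succ v ih =>
    rcases Nat.eq_zero_or_pos r with rfl | hr
    · have := hg 0
      have hk : k = 0 := by simpa using this
      simp [hk]
    · have h1 : ∑ τ ∈ Ico v (v + r), g τ = g v + ∑ τ ∈ Ico (v + 1) (v + r), g τ :=
        Finset.sum_eq_sum_Ico_succ_bot (by omega) _
      have h2 : ∑ τ ∈ Ico (v + 1) (v + 1 + r), g τ
          = ∑ τ ∈ Ico (v + 1) (v + r), g τ + g (v + r) := by
        rw [show v + 1 + r = v + r + 1 by omega, Finset.sum_Ico_succ_top (by omega)]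
      rw [h2, hg]
      rw [h1] at ih
      linarith [ih]

/-- The `m`-th of the `r` parts into which the exponent `x` is split: `⌈(x - m) / r⌉`. -/
def splitExp (r m x : ℕ) : ℕ := (x + (r - 1 - m)) / r

lemma splitExp_mono (r m : ℕ) : Monotone (splitExp r m) := fun _ _ h =>
  Nat.div_le_div_right (Nat.add_le_add_right h _)

lemma splitExp_eq_iff {r m : ℕ} (hm : m < r) (x t : ℕ) :
    splitExp r m x = t ↔ r * t + m + 1 ≤ x + r ∧ x < r * t + m + 1 := by
  rw [splitExp, Nat.div_eq_iff (by omega), mul_comm]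
  omega

lemma sum_splitExp {r : ℕ} (hr : 1 ≤ r) (x : ℕ) : ∑ m ∈ range r, splitExp r m x = x := by
  have h1 := Finset.sum_range_reflect (fun k => (x + k) / r) r
  have h2 := sum_Ico_of_quasiperiodic (r := r) (k := 1) (fun τ => τ / r)
    (fun τ => Nat.add_div_right τ hr) x
  have h3 : ∑ τ ∈ range r, τ / r = 0 := Finset.sum_eq_zero fun τ hτ =>
    Nat.div_eq_of_lt (mem_range.1 hτ)
  rw [h3, Finset.sum_Ico_eq_sum_range] at h2
  simp only [add_tsub_cancel_left, zero_add, one_mul] at h2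
  exact h1.trans h2

/-- The number of parts in which `x` and `y` agree is the multiplicity `r - (y - x)`. -/
lemma sum_splitExp_eq {r : ℕ} (hr : 1 ≤ r) {x y : ℕ} (hxy : x ≤ y) :
    ∑ m ∈ range r, (if splitExp r m x = splitExp r m y then 1 else 0) = r - (y - x) := by
  rcases lt_or_ge (y - x) r with h | h
  · have key : ∀ m ∈ range r, (if splitExp r m x = splitExp r m y then 1 else 0) +
        splitExp r m y = 1 + splitExp r m x := by
      intro m _
      have h1 := splitExp_mono r m hxy
      have h2 : splitExp r m y ≤ splitExp r m x + 1 := by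
        rw [splitExp, splitExp, ← Nat.add_div_right _ hr]
        exact Nat.div_le_div_right (by omega)
      split_ifs <;> omega
    have := Finset.sum_congr rfl key
    rw [Finset.sum_add_distrib, Finset.sum_add_distrib, sum_splitExp hr, sum_splitExp hr] at this
    simp only [sum_const, card_range, smul_eq_mul, mul_one] at this
    omega
  · rw [Nat.sub_eq_zero_of_le h]
    refine Finset.sum_eq_zero fun m _ => if_neg (ne_of_lt ?_)
    have : splitExp r m x + 1 ≤ splitExp r m y := by
      rw [splitExp, splitExp, ← Nat.add_div_right _ hr]
      exact Nat.div_le_div_right (by omega)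
    omega

/-- The windows with end `τ ≡ m` modulo `r` are the level sets of the `m`-th part. -/
lemma mem_window_iff {n : ℕ} (a : Fin n → ℕ) {r : ℕ} (hr : 1 ≤ r) (τ : ℕ) (j : Fin n) :
    j ∈ window a (τ + 1 - r) (τ + 1) ↔ splitExp r (τ % r) (a j) = τ / r := by
  rw [splitExp_eq_iff (Nat.mod_lt _ hr), Nat.div_add_mod]
  simp only [window, mem_filter, mem_univ, true_and]
  omega

lemma univ_sum_eq {n : ℕ} (g : Fin n → ℕ) (j : Fin n) :
    ∑ i, g i = ∑ i ∈ Iio j, g i + g j + ∑ k ∈ Ioi j, g k := by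
  have h1 : (univ : Finset (Fin n)) = Iio j ∪ insert j (Ioi j) := by
    ext i; simp only [mem_univ, mem_union, mem_Iio, mem_insert, mem_Ioi, true_iff]
    rcases lt_trichotomy i j with h | h | h <;> tauto
  rw [h1, Finset.sum_union, Finset.sum_insert (by simp), add_assoc]
  rw [Finset.disjoint_left]; intro i hi hi'
  simp only [mem_Iio, mem_insert, mem_Ioi] at hi hi'
  rcases hi' with rfl | h
  · exact lt_irrefl _ hi
  · exact lt_asymm hi h

lemma sum_card_window {n : ℕ} {a : Fin n → ℕ} (ha : Monotone a) (r : ℕ) (j : Fin n) :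
    ∑ τ ∈ Ico (a j) (a j + r), #(window a (τ + 1 - r) (τ + 1)) =
      ∑ i ∈ Iio j, (r - (a j - a i)) + r + ∑ k ∈ Ioi j, (r - (a k - a j)) := by
  have h1 : ∀ i, #{τ ∈ Ico (a j) (a j + r) | i ∈ window a (τ + 1 - r) (τ + 1)} =
      r - (a j - a i) - (a i - a j) := by
    intro i
    have : ({τ ∈ Ico (a j) (a j + r) | i ∈ window a (τ + 1 - r) (τ + 1)} : Finset ℕ) =
        Ico (max (a i) (a j)) (min (a i) (a j) + r) := by
      ext τ
      simp only [window, mem_filter, mem_univ, true_and, mem_Ico]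
      omega
    rw [this, Nat.card_Ico]
    omega
  have h2 : ∑ τ ∈ Ico (a j) (a j + r), #(window a (τ + 1 - r) (τ + 1)) =
      ∑ i, #{τ ∈ Ico (a j) (a j + r) | i ∈ window a (τ + 1 - r) (τ + 1)} := by
    simp_rw [Finset.card_eq_sum_ones, Finset.sum_filter]
    rw [Finset.sum_comm]
    refine Finset.sum_congr rfl fun τ _ => ?_
    rw [← Finset.sum_filter]
    congr 1
    ext i; simp
  rw [h2, Finset.sum_congr rfl fun i _ => h1 i, univ_sum_eq _ j]
  congr 1
  · congr 1
    · refine Finset.sum_congr rfl fun i hi => ?_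
      have := ha (mem_Iio.1 hi).le
      omega
    · omega
  · refine Finset.sum_congr rfl fun i hi => ?_
    have := ha (mem_Ioi.1 hi).le
    omega

/-- The `y`-degree allotted to the `m`-th factor: the total allotment is `D`, and each factor
receives at least `n - 1`. -/
def degShare (n r D m : ℕ) : ℕ := if m = 0 then D - (r - 1) * (n - 1) else n - 1

lemma sum_degShare {n r D : ℕ} (hr : 1 ≤ r) (hD : r * (n - 1) ≤ D) :
    ∑ m ∈ range r, degShare n r D m = D := by
  obtain ⟨r, rfl⟩ := Nat.exists_eq_add_of_le' hr
  rw [Finset.sum_range_succ']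
  simp only [degShare, Nat.add_eq_zero_iff, one_ne_zero, and_false, if_false, sum_const, card_range,
    smul_eq_mul, if_true, Nat.add_sub_cancel]
  have : r * (n - 1) ≤ D := le_trans (Nat.mul_le_mul_right _ (by omega)) hD
  omega

lemma le_degShare {n r D : ℕ} (hr : 1 ≤ r) (hD : r * (n - 1) ≤ D) (m : ℕ) :
    n ≤ degShare n r D m + 1 := by
  unfold degShare
  split_ifs
  · obtain ⟨r, rfl⟩ := Nat.exists_eq_add_of_le' hr
    rw [add_mul] at hD
    simp only [Nat.add_sub_cancel]
    omega
  · omega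

/-- The exponent with which the window ending at `τ` enters the construction: what remains of the
`y`-degree `degShare + s * (τ / r)` after the Vandermonde product of the window. -/
def windowMult {n : ℕ} (a : Fin n → ℕ) (r s D τ : ℕ) : ℕ :=
  degShare n r D (τ % r) + s * (τ / r) + 1 - #(window a (τ + 1 - r) (τ + 1))

lemma card_window_add_le {n : ℕ} (a : Fin n → ℕ) (r τ : ℕ) :
    #(window a (τ + 1 - r) (τ + 1)) + #{j | τ < a j} ≤ n := by
  rw [← Finset.card_union_of_disjoint]
  · exact (Finset.card_le_univ _).trans (by simp)
  · rw [Finset.disjoint_left]; intro j; simp [window]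

lemma windowMult_add {n : ℕ} (a : Fin n → ℕ) {r s D : ℕ} (hr : 1 ≤ r) (hD : r * (n - 1) ≤ D)
    (τ : ℕ) : windowMult a r s D τ + #(window a (τ + 1 - r) (τ + 1)) =
      degShare n r D (τ % r) + s * (τ / r) + 1 := by
  have h1 := card_window_add_le a r τ
  have h2 := le_degShare hr hD (τ % r)
  unfold windowMult
  omega

lemma card_lt_le_windowMult {n : ℕ} (a : Fin n → ℕ) {r s D : ℕ} (hr : 1 ≤ r)
    (hD : r * (n - 1) ≤ D) (τ : ℕ) : #{j | τ < a j} ≤ windowMult a r s D τ := by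
  have h1 := card_window_add_le a r τ
  have h2 := le_degShare hr hD (τ % r)
  unfold windowMult
  omega

/-- The windows through the level set of `a j` together have exactly the `y`-degree that remains
between the forced lower and upper parts of the bounds. -/
lemma sum_windowMult {n : ℕ} {a : Fin n → ℕ} (ha : Monotone a) {r s D : ℕ} (hr : 1 ≤ r)
    (hD : r * (n - 1) ≤ D) (j : Fin n) :
    ∑ τ ∈ Ico (a j) (a j + r), windowMult a r s D τ +
      (∑ i ∈ Iio j, (r - (a j - a i)) + ∑ k ∈ Ioi j, (r - (a k - a j))) = D + s * a j := by
  have h1 := Finset.sum_congr (rfl : Ico (a j) (a j + r) = _)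
    fun τ _ => windowMult_add a (s := s) hr hD τ
  have h2 := sum_Ico_of_quasiperiodic (r := r) (k := s)
    (fun τ => degShare n r D (τ % r) + s * (τ / r))
    (fun τ => by rw [Nat.add_mod_right, Nat.add_div_right _ hr, mul_add, mul_one, add_assoc]) (a j)
  have h3 : ∑ τ ∈ range r, (degShare n r D (τ % r) + s * (τ / r)) = D := by
    refine (Finset.sum_congr rfl fun τ hτ => ?_).trans (sum_degShare hr hD)
    rw [Nat.mod_eq_of_lt (mem_range.1 hτ), Nat.div_eq_of_lt (mem_range.1 hτ), mul_zero, add_zero]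
  rw [Finset.sum_add_distrib, sum_card_window ha, Finset.sum_add_distrib, h2, h3] at h1
  simp only [sum_const, Nat.card_Ico, smul_eq_mul, mul_one, add_tsub_cancel_left] at h1
  omega

/-! ### Construction of elements with given trailing exponent -/

/-- The exponent `a` with every entry replaced by its `m`-th part. -/
def partExp {n : ℕ} (a : Fin n → ℕ) (r m : ℕ) : Fin n →₀ ℕ :=
  Finsupp.equivFunOnFinite.symm fun j => splitExp r m (a j)

@[simp] lemma partExp_apply {n : ℕ} (a : Fin n → ℕ) (r m : ℕ) (j : Fin n) :
    partExp a r m j = splitExp r m (a j) := rfl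

/-- The window symmetric polynomials available to the `m`-th factor. -/
def factorSpan {n : ℕ} (a : Fin n → ℕ) (r : ℕ) (u : ℕ → ℕ) (T m : ℕ) :
    Submodule ℂ (MvPolynomial (Fin n) ℂ) :=
  ∏ τ ∈ range T with τ % r = m, esymmSpan (window a (τ + 1 - r) (τ + 1)) ^ u τ

lemma prod_factorSpan {n : ℕ} (a : Fin n → ℕ) {r : ℕ} (hr : 1 ≤ r) (u : ℕ → ℕ) (T : ℕ) :
    ∏ m ∈ range r, factorSpan a r u T m =
      ∏ τ ∈ range T, esymmSpan (window a (τ + 1 - r) (τ + 1)) ^ u τ :=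
  Finset.prod_fiberwise_of_maps_to (fun τ _ => mem_range.2 (Nat.mod_lt τ hr)) _

/-- Each index lies in exactly one level set of the `m`-th part, hence in at most one of the
windows making up `factorSpan`; this bounds the degree. -/
lemma factorSpan_le {n : ℕ} (a : Fin n → ℕ) {r : ℕ} (hr : 1 ≤ r) (u : ℕ → ℕ) (T m : ℕ) :
    factorSpan a r u T m ≤
      blockSymm (partExp a r m) (fun j => u (r * splitExp r m (a j) + m)) := by
  classical
  have h1 : ∀ τ ∈ ({τ ∈ range T | τ % r = m} : Finset ℕ),
      esymmSpan (window a (τ + 1 - r) (τ + 1)) ^ u τ ≤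
      blockSymm (partExp a r m) (∑ _i ∈ range (u τ),
        fun j => if j ∈ window a (τ + 1 - r) (τ + 1) then 1 else 0) := by
    intro τ hτ
    have hm : τ % r = m := (mem_filter.1 hτ).2
    have := prod_le_blockSymm (range (u τ)) (partExp a r m)
      (fun _ j => if j ∈ window a (τ + 1 - r) (τ + 1) then 1 else 0)
      (fun _ => esymmSpan (window a (τ + 1 - r) (τ + 1)))
      (fun _ _ => esymmSpan_le_blockSymm _ _ (fun i hi j hij => by
        rw [mem_window_iff a hr] at hi ⊢
        rw [partExp_apply, partExp_apply] at hij
        rw [hm] at hi ⊢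
        exact hij.trans hi))
    rwa [Finset.prod_const, card_range] at this
  refine (prod_le_blockSymm _ _ _ _ h1).trans (blockSymm_mono _ fun j => ?_)
  have h2 : ∀ τ ∈ ({τ ∈ range T | τ % r = m} : Finset ℕ),
      (∑ _i ∈ range (u τ), fun j => if j ∈ window a (τ + 1 - r) (τ + 1) then 1 else 0) j ≤
      if τ = r * splitExp r m (a j) + m then u τ else 0 := by
    intro τ hτ
    have hm : τ % r = m := (mem_filter.1 hτ).2
    rw [Finset.sum_apply, Finset.sum_const, card_range, smul_eq_mul]
    by_cases hj : j ∈ window a (τ + 1 - r) (τ + 1)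
    · rw [if_pos hj, if_pos, mul_one]
      rw [mem_window_iff a hr, hm] at hj
      rw [hj, ← hm, Nat.div_add_mod]
    · rw [if_neg hj, mul_zero]; exact Nat.zero_le _
  rw [Finset.sum_apply]
  refine (Finset.sum_le_sum h2).trans ?_
  rw [Finset.sum_ite_eq']
  split_ifs
  · exact le_rfl
  · exact Nat.zero_le _

/-- The order of the stabiliser of an exponent under permutation of its entries. -/
def stabCard {n : ℕ} (α : Fin n →₀ ℕ) : ℕ := #{σ : Equiv.Perm (Fin n) | α.mapDomain σ = α}

lemma stabCard_ne_zero {n : ℕ} (α : Fin n →₀ ℕ) : stabCard α ≠ 0 := by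
  refine Finset.card_ne_zero.2 ⟨1, ?_⟩
  simp only [mem_filter, mem_univ, true_and]
  exact Finsupp.mapDomain_id

/-- The Vandermonde product over the level sets of `α`. -/
def levelVandermonde {n : ℕ} (α : Fin n → ℕ) : MvPolynomial (Fin n) ℂ :=
  diffProd fun i j => if α i = α j then 1 else 0

/-- The `m`-th alternating factor: the antisymmetrisation of a polynomial that is antisymmetric on
the level sets of the `m`-th part of `a`, so that the terms at the lowest exponent add up. -/
lemma lowestAt_factor {n : ℕ} {a : Fin n → ℕ} (ha : Monotone a) {r m : ℕ}
    {w : Fin n → ℕ} {q : MvPolynomial (Fin n) ℂ} (hq : q ∈ blockSymm (partExp a r m) w) :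
    LowestAt (inX n (altSum (partExp a r m) (levelVandermonde (partExp a r m) * q)))
      (partExp a r m) ((stabCard (partExp a r m) : ℂ) •
        (levelVandermonde (partExp a r m) * q)) := by
  have hmono : Monotone (partExp a r m) := fun i j hij => splitExp_mono r m (ha hij)
  refine lowestAt_altSum hmono fun σ hσ => ?_
  have hσ' : ∀ j, partExp a r m (σ j) = partExp a r m j := by
    intro j
    conv_lhs => rw [← hσ]
    rw [mapDomain_perm_apply, Equiv.symm_apply_apply]
  rw [map_mul, hq.1 σ hσ', levelVandermonde, rename_diffProd hmono σ hσ', smul_mul_assoc]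

lemma degreeOf_levelVandermonde {n : ℕ} (α : Fin n → ℕ) (j : Fin n) :
    (levelVandermonde α).degreeOf j + 1 = #{i | α i = α j} := by
  classical
  rw [levelVandermonde, degreeOf_diffProd, Finset.card_filter, univ_sum_eq _ j, if_pos rfl]
  have : ∑ k ∈ Ioi j, (if α j = α k then 1 else 0) = ∑ k ∈ Ioi j, (if α k = α j then 1 else 0) :=
    Finset.sum_congr rfl fun k _ => by simp only [eq_comm]
  rw [this]
  ring

lemma factor_mem_suppInPoly {n : ℕ} {a : Fin n → ℕ} {r s D m : ℕ} (hr : 1 ≤ r)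
    (hD : r * (n - 1) ≤ D) (hm : m < r) {M : ℕ} (hM : ∀ j, a j ≤ M)
    {q : MvPolynomial (Fin n) ℂ}
    (hq : q ∈ blockSymm (partExp a r m)
      (fun j => windowMult a r s D (r * splitExp r m (a j) + m))) :
    altSum (partExp a r m) (levelVandermonde (partExp a r m) * q) ∈
      SuppInPoly n s (splitExp r m M) (degShare n r D m) := by
  classical
  refine altSum_mem_suppInPoly (fun j => ?_) (fun j => ?_)
  · exact_mod_cast splitExp_mono r m (hM j)
  · have h1 := MvPolynomial.degreeOf_mul_le j (levelVandermonde (partExp a r m)) q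
    have h2 := hq.2 j
    have h3 := degreeOf_levelVandermonde (partExp a r m) j
    have h4 := windowMult_add a (s := s) hr hD (r * splitExp r m (a j) + m)
    have h5 : (r * splitExp r m (a j) + m) % r = m := by
      rw [Nat.mul_add_mod, Nat.mod_eq_of_lt hm]
    have h6 : (r * splitExp r m (a j) + m) / r = splitExp r m (a j) := by
      rw [Nat.mul_add_div (by omega), Nat.div_eq_of_lt hm, add_zero]
    have h7 : ({i | partExp a r m i = partExp a r m j} : Finset (Fin n)) =
        window a (r * splitExp r m (a j) + m + 1 - r) (r * splitExp r m (a j) + m + 1) := by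
      ext i
      rw [mem_window_iff a hr, h5, h6, mem_filter]
      simp only [mem_univ, true_and, partExp_apply]
    rw [h5, h6] at h4
    rw [h7] at h3
    rw [partExp_apply]
    norm_cast
    simp only at h2
    omega

lemma prod_levelVandermonde {n : ℕ} {a : Fin n → ℕ} (ha : Monotone a) {r : ℕ} (hr : 1 ≤ r) :
    ∏ m ∈ range r, levelVandermonde (partExp a r m) =
      diffProd fun i j => r - (a j - a i) := by
  unfold levelVandermonde diffProd
  rw [Finset.prod_comm]
  refine Finset.prod_congr rfl fun j _ => ?_
  rw [Finset.prod_comm]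
  refine Finset.prod_congr rfl fun i hi => ?_
  rw [Finset.prod_pow_eq_pow_sum]
  congr 1
  exact sum_splitExp_eq hr (ha (mem_Iio.1 hi).le)

lemma sum_partExp {n : ℕ} (a : Fin n → ℕ) {r : ℕ} (hr : 1 ≤ r) :
    ∑ m ∈ range r, partExp a r m = Finsupp.equivFunOnFinite.symm a := by
  ext j
  rw [Finsupp.finsetSum_apply]
  exact sum_splitExp hr (a j)

/-- The polynomials `q` for which a multiple of `diffProd (r - (a j - a i)) * q` is the
lowest `x`-coefficient, at `a`, of an element of `A^r` with support in the trapezoid. -/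
def realizable {n : ℕ} (a : Fin n → ℕ) (r s D M : ℕ) : Submodule ℂ (MvPolynomial (Fin n) ℂ) where
  carrier := {q | ∃ f ∈ Ar n r ⊓ SuppInPoly n s M D,
    LowestAt (inX n f) (Finsupp.equivFunOnFinite.symm a)
      ((∏ m ∈ range r, (stabCard (partExp a r m) : ℂ)) •
        ((diffProd fun i j => r - (a j - a i)) * q))}
  add_mem' := by
    rintro p q ⟨f, hf, h⟩ ⟨g, hg, h'⟩
    refine ⟨f + g, Submodule.add_mem _ hf hg, ?_⟩
    rw [map_add, mul_add, smul_add]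
    exact h.add h'
  zero_mem' := ⟨0, Submodule.zero_mem _, by rw [map_zero, mul_zero, smul_zero]; constructor <;> simp⟩
  smul_mem' := by
    rintro c q ⟨f, hf, h⟩
    refine ⟨c • f, Submodule.smul_mem _ _ hf, ?_, ?_⟩
    · intro β hβ
      rw [map_smul, MvPolynomial.coeff_smul, h.1 β hβ, smul_zero]
    · rw [map_smul, MvPolynomial.coeff_smul, h.2, mul_smul_comm, smul_comm]

open scoped Pointwise in
lemma prod_factorSpan_le {n : ℕ} {a : Fin n → ℕ} (ha : Monotone a) {r s D : ℕ} (hr : 1 ≤ r)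
    (hD : r * (n - 1) ≤ D) {M : ℕ} (hM : ∀ j, a j ≤ M) (T : ℕ) :
    ∏ m ∈ range r, factorSpan a r (windowMult a r s D) T m ≤ realizable a r s D M := by
  classical
  have h1 : ∏ m ∈ range r, factorSpan a r (windowMult a r s D) T m = Submodule.span ℂ
      (∏ m ∈ range r, (factorSpan a r (windowMult a r s D) T m : Set (MvPolynomial (Fin n) ℂ))) := by
    rw [← Submodule.prod_span]
    simp only [Submodule.span_eq]
  rw [h1, Submodule.span_le]
  intro q hq
  obtain ⟨p, hp, rfl⟩ := (Set.mem_finsetProd _ _ _).1 hq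
  have hp' : ∀ m ∈ range r, p m ∈ blockSymm (partExp a r m)
      (fun j => windowMult a r s D (r * splitExp r m (a j) + m)) :=
    fun m hm => factorSpan_le a hr _ T m (hp hm)
  refine ⟨∏ m ∈ range r, altSum (partExp a r m) (levelVandermonde (partExp a r m) * p m),
    ⟨?_, ?_⟩, ?_⟩
  · refine Submodule.subset_span
      ⟨fun m => altSum (partExp a r m) (levelVandermonde (partExp a r m) * p m),
        fun m => isAlternating_altSum _ _, ?_⟩
    rw [Finset.prod_range]
  · have := prod_mem_suppInPoly (range r) (fun m => (splitExp r m M : ℤ))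
      (fun m => (degShare n r D m : ℤ)) _
      (fun m hm => factor_mem_suppInPoly hr hD (mem_range.1 hm) hM (hp' m hm))
    rwa [← Nat.cast_sum, ← Nat.cast_sum, sum_splitExp hr, sum_degShare hr hD] at this
  · have := LowestAt.prod (range r) _ _ _ (fun m hm => lowestAt_factor ha (hp' m hm))
    rw [sum_partExp a hr, ← map_prod, Finset.prod_smul, Finset.prod_mul_distrib,
      prod_levelVandermonde ha hr] at this
    exact this

/-- Every exponent satisfying the inequalities is a trailing exponent. -/
lemma exists_trailing {n : ℕ} {a b : Fin n → ℕ} (ha : Monotone a) {r s D : ℕ} (hr : 1 ≤ r)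
    (hD : r * (n - 1) ≤ D) {M : ℕ} (hM : ∀ j, a j ≤ M)
    (hblock : ∀ i j, i < j → a i = a j →
      b i + ∑ k ∈ Iio j, (r - (a j - a k)) ≤ b j + ∑ k ∈ Iio i, (r - (a i - a k)))
    (hlow : ∀ j, ∑ i ∈ Iio j, (r - (a j - a i)) ≤ b j)
    (hupp : ∀ j, b j + ∑ k ∈ Ioi j, (r - (a k - a j)) ≤ D + s * a j) :
    ∃ f ∈ Ar n r ⊓ SuppInPoly n s M D,
      IsTrailingExp n f (Finsupp.equivFunOnFinite.symm (Sum.elim a b)) := by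
  obtain ⟨q, hq, hlq⟩ := exists_mem_prod_blocks a
    (fun j => b j - ∑ i ∈ Iio j, (r - (a j - a i)))
    (fun v => ∑ τ ∈ Ico v (v + r), windowMult a r s D τ) (M + 1)
    (fun j => Nat.lt_succ_of_le (hM j))
    (fun i j hij he => by
      have h1 := hblock i j hij he
      have h2 := hlow i
      have h3 := hlow j
      omega)
    (fun j => by
      have h1 := sum_windowMult ha (s := s) hr hD j
      have h2 := hupp j
      have h3 := hlow j
      omega)
  have hq' := prod_blocks_le_prod_windows a hr (windowMult a r s D)
    (card_lt_le_windowMult a hr hD) (M + 1) (fun j => Nat.lt_succ_of_le (hM j)) hq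
  rw [← prod_factorSpan a hr] at hq'
  obtain ⟨f, hf, hl⟩ := prod_factorSpan_le ha hr hD hM _ hq'
  refine ⟨f, hf, ?_⟩
  obtain ⟨c, hc, hlV⟩ := lowestAt_diffProd (n := n) fun i j => r - (a j - a i)
  have hC : (∏ m ∈ range r, (stabCard (partExp a r m) : ℂ)) ≠ 0 :=
    Finset.prod_ne_zero_iff.2 fun m _ => Nat.cast_ne_zero.2 (stabCard_ne_zero _)
  have key := hlV.mul hlq
  have hb : (Finsupp.equivFunOnFinite.symm fun j => ∑ i ∈ Iio j, (r - (a j - a i))) +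
      (Finsupp.equivFunOnFinite.symm fun j => b j - ∑ i ∈ Iio j, (r - (a j - a i))) =
      Finsupp.equivFunOnFinite.symm b := by
    ext j
    have := hlow j
    simp only [Finsupp.add_apply, Finsupp.equivFunOnFinite_symm_apply_apply]
    omega
  rw [hb, mul_one] at key
  refine (isTrailingExp_iff f (Finsupp.equivFunOnFinite.symm a)
    (Finsupp.equivFunOnFinite.symm b)).2 ⟨_, (∏ m ∈ range r, (stabCard (partExp a r m) : ℂ)) * c,
      mul_ne_zero hC hc, hl, ?_, ?_⟩
  · intro β hβ
    rw [MvPolynomial.coeff_smul, key.1 β hβ, smul_zero]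
  · rw [MvPolynomial.coeff_smul, key.2, smul_eq_mul]

/-! ### The conditions in natural numbers, and the conclusion -/

lemma Iio_succ_eq {n : ℕ} {i j : Fin n} (h : (j : ℕ) = i + 1) : Iio j = insert i (Iio i) := by
  ext k
  simp only [mem_Iio, mem_insert, Fin.lt_def, Fin.ext_iff]
  omega

/-- The condition on consecutive points of equal first coordinate, propagated along a block:
subtracting the forced part of `b` leaves a nondecreasing sequence. -/
lemma block_le_of_consecutive {n : ℕ} {a b : Fin n → ℕ} (ha : Monotone a) {r : ℕ}
    (h : ∀ i j : Fin n, (j : ℕ) = i + 1 → a i = a j → b i + r ≤ b j) :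
    ∀ i j, i < j → a i = a j →
      b i + ∑ k ∈ Iio j, (r - (a j - a k)) ≤ b j + ∑ k ∈ Iio i, (r - (a i - a k)) := by
  intro i j hij he
  obtain ⟨t, ht⟩ : ∃ t : ℕ, (j : ℕ) = i + 1 + t := Nat.exists_eq_add_of_le (Fin.lt_def.1 hij)
  induction t generalizing j with
  | zero =>
    have h1 := h i j ht he
    rw [Iio_succ_eq ht, Finset.sum_insert (by simp), he]
    omega
  | succ t ih =>
    let j' : Fin n := ⟨i + 1 + t, by have := j.2; omega⟩
    have hj' : (j : ℕ) = j' + 1 := ht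
    have hij' : i < j' := Fin.lt_def.2 (by simp only [j']; omega)
    have hjj : j' ≤ j := Fin.le_def.2 (by omega)
    have he' : a i = a j' := le_antisymm (ha hij'.le) ((ha hjj).trans he.ge)
    have h1 := ih j' hij' he' rfl
    have h2 := h j' j hj' (he'.symm.trans he)
    rw [Iio_succ_eq hj', Finset.sum_insert (by simp), ← he, ← he']
    rw [← he'] at h1
    omega

lemma cast_sum_sub {n : ℕ} (t : Finset (Fin n)) (r : ℕ) (x y : Fin n → ℕ)
    (h : ∀ i ∈ t, x i ≤ y i) :
    ∑ i ∈ t, max ((r : ℤ) - ((y i : ℤ) - (x i : ℤ))) 0 = ((∑ i ∈ t, (r - (y i - x i)) : ℕ) : ℤ) := by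
  rw [Nat.cast_sum]
  refine Finset.sum_congr rfl fun i hi => ?_
  have := h i hi
  omega

lemma filter_lt_eq_Iio {n : ℕ} (j : Fin n) : univ.filter (fun i => i < j) = Iio j := by
  ext; simp

lemma filter_gt_eq_Ioi {n : ℕ} (j : Fin n) : univ.filter (fun k => j < k) = Ioi j := by
  ext; simp

/-- The conditions on the points, rewritten in natural numbers. -/
lemma rLexIncIn_iff {n : ℕ} {s d1 d2 : ℤ} {r : ℕ} (hn : 1 ≤ n) (a b : Fin n → ℕ) :
    RLexIncIn n s d1 d2 (r : ℤ) (fun j => (a j : ℤ)) (fun j => (b j : ℤ)) ↔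
      Monotone a ∧ (∀ i j : Fin n, (j : ℕ) = i + 1 → a i = a j → b i + r ≤ b j) ∧
      (∀ j, (a j : ℤ) ≤ d1) ∧ (∀ j, ∑ i ∈ Iio j, (r - (a j - a i)) ≤ b j) ∧
      ∀ j, ((b j + ∑ k ∈ Ioi j, (r - (a k - a j)) : ℕ) : ℤ) ≤ d2 + s * a j := by
  have hsum : Monotone a → ∀ j : Fin n,
      ((∑ i ∈ univ.filter (fun i => i < j), max ((r : ℤ) - ((a j : ℤ) - (a i : ℤ))) 0) =
        ((∑ i ∈ Iio j, (r - (a j - a i)) : ℕ) : ℤ)) ∧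
      ((∑ k ∈ univ.filter (fun k => j < k), max ((r : ℤ) - ((a k : ℤ) - (a j : ℤ))) 0) =
        ((∑ k ∈ Ioi j, (r - (a k - a j)) : ℕ) : ℤ)) := by
    intro ha j
    rw [filter_lt_eq_Iio, filter_gt_eq_Ioi]
    exact ⟨cast_sum_sub _ r a (fun _ => a j) fun i hi => ha (mem_Iio.1 hi).le,
      cast_sum_sub _ r (fun _ => a j) a fun i hi => ha (mem_Ioi.1 hi).le⟩
  constructor
  · rintro ⟨h1, h2, -, h4, h5⟩
    have ha : Monotone a := fun i j hij => Int.ofNat_le.1 (h1 hij)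
    refine ⟨ha, ?_, ?_, ?_, ?_⟩
    · intro i j hij he
      have hi : (i : ℕ) + 1 < n := hij ▸ j.2
      obtain rfl : j = ⟨i + 1, hi⟩ := Fin.ext hij
      have : (b i : ℤ) + r ≤ b ⟨i + 1, hi⟩ := h2 i hi (by simpa using he)
      exact_mod_cast this
    · intro j
      have h := h1 (show j ≤ ⟨n - 1, by omega⟩ from Fin.le_def.2 (by have := j.2; simp only; omega))
      exact h.trans (h4 hn)
    · intro j
      have := (h5 j).1
      simp only at this
      rw [((hsum ha) j).1] at this
      exact_mod_cast this
    · intro j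
      have := (h5 j).2
      simp only at this
      rw [((hsum ha) j).2] at this
      rw [Nat.cast_add]
      linarith
  · rintro ⟨ha, h2, h3, h4, h5⟩
    refine ⟨fun i j hij => Int.ofNat_le.2 (ha hij), ?_, fun _ => Int.natCast_nonneg _,
      fun _ => h3 _, fun j => ⟨?_, ?_⟩⟩
    · intro i h he
      have := h2 i ⟨i + 1, h⟩ rfl (by simpa using he)
      simp only
      exact_mod_cast this
    · simp only
      rw [((hsum ha) j).1]
      exact_mod_cast h4 j
    · simp only
      rw [((hsum ha) j).2]
      have := h5 j
      rw [Nat.cast_add] at this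
      linarith

/-- Corollary 5.2 of the paper: for `r ≥ 1` and `d_1, d_2 > r(n−1)`, a
vector of `ℤ^{2n}_{≥0}` is the trailing exponent of some nonzero element of the subspace
`W ⊆ A^r` of polynomials with support in `P_L` iff the corresponding `n`-tuple of points is
`r`-lexicographically increasing in `P_L`. -/
theorem trailing_exponents_of_sections (n : ℕ) (hn : 1 ≤ n) (s : ℤ) (hs : 0 ≤ s)
    (r : ℕ) (hr : 1 ≤ r) (d1 d2 : ℤ)
    (hd1 : (r : ℤ) * ((n : ℤ) - 1) < d1) (hd2 : (r : ℤ) * ((n : ℤ) - 1) < d2)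
    (a b : Fin n → ℕ) :
    (∃ f ∈ Ar n r ⊓ SuppInPoly n s d1 d2,
        IsTrailingExp n f (Finsupp.equivFunOnFinite.symm (Sum.elim a b))) ↔
      RLexIncIn n s d1 d2 (r : ℤ)
        (fun j => ((a j : ℕ) : ℤ)) (fun j => ((b j : ℕ) : ℤ)) := by
  rw [rLexIncIn_iff hn]
  have hpos : (0 : ℤ) ≤ (r : ℤ) * ((n : ℤ) - 1) := mul_nonneg (by omega) (by omega)
  constructor
  · rintro ⟨f, ⟨hfA, hfS⟩, hf⟩
    obtain ⟨g, c, hc, hg, hgb⟩ := (isTrailingExp_iff f (Finsupp.equivFunOnFinite.symm a)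
      (Finsupp.equivFunOnFinite.symm b)).1 hf
    -- Every monomial of the lowest coefficient `g` comes from a monomial of `f`.
    have hsupp : ∀ β ∈ g.support, ∀ j, (a j : ℤ) ≤ d1 ∧ (β j : ℤ) ≤ d2 + s * a j := by
      intro β hβ j
      have hmem : joinExp (Finsupp.equivFunOnFinite.symm a : Fin n →₀ ℕ) β ∈ f.support := by
        rw [MvPolynomial.mem_support_iff, coeff_joinExp, hg.2]
        exact MvPolynomial.mem_support_iff.1 hβ
      exact hfS _ hmem j
    have hbmem : Finsupp.equivFunOnFinite.symm b ∈ g.support :=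
      MvPolynomial.mem_support_iff.2 (by rw [hgb.2]; exact hc)
    obtain ⟨h1, h2, h3⟩ := bounds_of_lowestAt hfA hg hgb hc
    refine ⟨h1, ?_, fun j => (hsupp _ hbmem j).1, fun j => (h3 j).1, fun j => ?_⟩
    · intro i j hij he
      exact h2 i j (Fin.lt_def.2 (by omega)) he
    · have hnn : (0 : ℤ) ≤ d2 + s * a j := add_nonneg (by omega) (mul_nonneg hs (by omega))
      have hdeg : g.degreeOf j ≤ (d2 + s * a j).toNat := by
        rw [MvPolynomial.degreeOf_le_iff]
        intro β hβ
        have := (hsupp β hβ j).2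
        omega
      have h4 : b j + ∑ k ∈ Ioi j, (r - (a k - a j)) ≤ g.degreeOf j := (h3 j).2
      omega
  · rintro ⟨ha, h2, h3, h4, h5⟩
    lift s to ℕ using hs
    lift d1 to ℕ using by omega
    lift d2 to ℕ using by omega
    have hD : r * (n - 1) ≤ d2 := by
      have : ((r * (n - 1) : ℕ) : ℤ) < d2 := by
        rw [Nat.cast_mul, Nat.cast_sub hn]; exact_mod_cast hd2
      omega
    exact exists_trailing ha hr hD (fun j => by exact_mod_cast h3 j)
      (block_le_of_consecutive ha h2) h4 (fun j => by exact_mod_cast h5 j)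

end
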